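/- arXiv:2007.06148 — 3 statements merged into one kernel-verified Lean document; each statement's English description precedes it below -/
import Mathlib

section
/- Let z* be a local minimizer of the MPSC, let d ∈ C(z*) be a critical direction, suppose MPSC quasi-normality holds at z* in direction d, and suppose f, g, h, G, H are twice differentiable at z*. Then there exists an M-multiplier in direction d, i.e. multipliers (λ^g, λ^h, λ^G, λ^H) satisfying the M-stationarity conditions in direction d, such that in addition the second-order condition dᵀ ∇²_z L(z*, λ^g, λ^h, λ^G, λ^H) d ≥ 0 holds, where L(z, λ^g, λ^h, λ^G, λ^H) := f(z) + Σ_{i=1}^p λ_i^g g_i(z) + Σ_{j=1}^q λ_j^h h_j(z) + Σ_{i=1}^m (λ_i^G G_i(z) + λ_i^H H_i(z)). -/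
open scoped Classical InnerProductSpace
open Filter Topology

noncomputable section

/-- Euclidean space `ℝⁿ`. -/
abbrev Euc (n : ℕ) : Type := EuclideanSpace ℝ (Fin n)

/-- Data of a mathematical program with switching constraints (MPSC):
`min f(z)` s.t. `g(z) ≤ 0`, `h(z) = 0`, `Gᵢ(z)Hᵢ(z) = 0 (i = 1,…,m)`,
with all defining functions continuously differentiable (gradients `f'`, `g'`, … are
genuine gradient maps, and they are continuous). -/
structure MPSC (n p q m : ℕ) where
  f : Euc n → ℝ
  g : Fin p → Euc n → ℝ
  h : Fin q → Euc n → ℝ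
  G : Fin m → Euc n → ℝ
  H : Fin m → Euc n → ℝ
  f' : Euc n → Euc n
  g' : Fin p → Euc n → Euc n
  h' : Fin q → Euc n → Euc n
  G' : Fin m → Euc n → Euc n
  H' : Fin m → Euc n → Euc n
  grad_f : ∀ z, HasGradientAt f (f' z) z
  grad_g : ∀ i z, HasGradientAt (g i) (g' i z) z
  grad_h : ∀ j z, HasGradientAt (h j) (h' j z) z
  grad_G : ∀ i z, HasGradientAt (G i) (G' i z) z
  grad_H : ∀ i z, HasGradientAt (H i) (H' i z) z
  cont_f' : Continuous f'
  cont_g' : ∀ i, Continuous (g' i)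
  cont_h' : ∀ j, Continuous (h' j)
  cont_G' : ∀ i, Continuous (G' i)
  cont_H' : ∀ i, Continuous (H' i)

namespace MPSC

variable {n p q m : ℕ} (P : MPSC n p q m)

/-- The feasible region `F` of the MPSC. -/
def Feas : Set (Euc n) :=
  {z | (∀ i, P.g i z ≤ 0) ∧ (∀ j, P.h j z = 0) ∧ ∀ i, P.G i z * P.H i z = 0}

/-- Active inequality constraints `I_g*`. -/
def Ig (zs : Euc n) : Set (Fin p) := {i | P.g i zs = 0}

/-- `I_G* = {i : Gᵢ(z*) = 0, Hᵢ(z*) ≠ 0}`. -/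
def IGs (zs : Euc n) : Set (Fin m) := {i | P.G i zs = 0 ∧ P.H i zs ≠ 0}

/-- `I_H* = {i : Gᵢ(z*) ≠ 0, Hᵢ(z*) = 0}`. -/
def IHs (zs : Euc n) : Set (Fin m) := {i | P.G i zs ≠ 0 ∧ P.H i zs = 0}

/-- `I_GH* = {i : Gᵢ(z*) = Hᵢ(z*) = 0}`. -/
def IGH (zs : Euc n) : Set (Fin m) := {i | P.G i zs = 0 ∧ P.H i zs = 0}

/-- `I_g*(d)`. -/
def Igd (zs d : Euc n) : Set (Fin p) := {i | P.g i zs = 0 ∧ ⟪P.g' i zs, d⟫_ℝ = 0}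

/-- `I_G*(d)`. -/
def IGd (zs d : Euc n) : Set (Fin m) :=
  {i | i ∈ P.IGH zs ∧ ⟪P.G' i zs, d⟫_ℝ = 0 ∧ ⟪P.H' i zs, d⟫_ℝ ≠ 0}

/-- `I_H*(d)`. -/
def IHd (zs d : Euc n) : Set (Fin m) :=
  {i | i ∈ P.IGH zs ∧ ⟪P.G' i zs, d⟫_ℝ ≠ 0 ∧ ⟪P.H' i zs, d⟫_ℝ = 0}

/-- `I_GH*(d)`. -/
def IGHd (zs d : Euc n) : Set (Fin m) :=
  {i | i ∈ P.IGH zs ∧ ⟪P.G' i zs, d⟫_ℝ = 0 ∧ ⟪P.H' i zs, d⟫_ℝ = 0}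

/-- The linearization cone `L(z*)` of the MPSC at `z*`. -/
def LinCone (zs : Euc n) : Set (Euc n) :=
  {d | (∀ i ∈ P.Ig zs, ⟪P.g' i zs, d⟫_ℝ ≤ 0) ∧ (∀ j, ⟪P.h' j zs, d⟫_ℝ = 0) ∧
       (∀ i ∈ P.IGs zs, ⟪P.G' i zs, d⟫_ℝ = 0) ∧ (∀ i ∈ P.IHs zs, ⟪P.H' i zs, d⟫_ℝ = 0) ∧
       (∀ i ∈ P.IGH zs, ⟪P.G' i zs, d⟫_ℝ * ⟪P.H' i zs, d⟫_ℝ = 0)}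

/-- The critical cone `C(z*)`. -/
def Crit (zs : Euc n) : Set (Euc n) := {d ∈ P.LinCone zs | ⟪P.f' zs, d⟫_ℝ ≤ 0}

/-- `(λ^g, λ^h, λ^G, λ^H)` is an M-multiplier in direction `d` at `z*`. -/
def IsMMultDir (zs d : Euc n) (lg : Fin p → ℝ) (lh : Fin q → ℝ) (lG lH : Fin m → ℝ) : Prop :=
  ((0 : Euc n) = P.f' zs
      + (∑ i ∈ Finset.univ.filter (fun i => i ∈ P.Igd zs d), lg i • P.g' i zs)
      + (∑ j, lh j • P.h' j zs) + (∑ i, (lG i • P.G' i zs + lH i • P.H' i zs))) ∧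
  (∀ i ∈ P.Igd zs d, 0 ≤ lg i) ∧ (∀ i ∉ P.Igd zs d, lg i = 0) ∧
  (∀ i, i ∈ P.IHs zs ∪ P.IHd zs d → lG i = 0) ∧
  (∀ i, i ∈ P.IGs zs ∪ P.IGd zs d → lH i = 0) ∧
  ∀ i ∈ P.IGHd zs d, lG i * lH i = 0

/-- `z*` is M-stationary in direction `d`. -/
def MStatDir (zs d : Euc n) : Prop :=
  ∃ (lg : Fin p → ℝ) (lh : Fin q → ℝ) (lG lH : Fin m → ℝ), P.IsMMultDir zs d lg lh lG lH

/-- `z*` is S-stationary in direction `d`. -/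
def SStatDir (zs d : Euc n) : Prop :=
  ∃ (lg : Fin p → ℝ) (lh : Fin q → ℝ) (lG lH : Fin m → ℝ),
    P.IsMMultDir zs d lg lh lG lH ∧ ∀ i ∈ P.IGHd zs d, lG i = 0 ∧ lH i = 0

/-- MPSC-LICQ in direction `d` at `z*`. -/
def LICQd (zs d : Euc n) : Prop :=
  LinearIndependent ℝ
    (Sum.elim (fun i : {i // i ∈ P.Igd zs d} => P.g' i.1 zs)
      (Sum.elim (fun j : Fin q => P.h' j zs)
        (Sum.elim (fun i : {i // i ∈ P.IGs zs ∪ P.IGd zs d ∪ P.IGHd zs d} => P.G' i.1 zs)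
          (fun i : {i // i ∈ P.IHs zs ∪ P.IHd zs d ∪ P.IGHd zs d} => P.H' i.1 zs))))

/-- MPSC-LICQ at `z*`. -/
def LICQ (zs : Euc n) : Prop :=
  LinearIndependent ℝ
    (Sum.elim (fun i : {i // i ∈ P.Ig zs} => P.g' i.1 zs)
      (Sum.elim (fun j : Fin q => P.h' j zs)
        (Sum.elim (fun i : {i // i ∈ P.IGs zs ∪ P.IGH zs} => P.G' i.1 zs)
          (fun i : {i // i ∈ P.IHs zs ∪ P.IGH zs} => P.H' i.1 zs))))

/-- MPSC quasi-normality at `z*` in direction `d`. -/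
def QuasiNormalDir (zs d : Euc n) : Prop :=
  ∀ (lg : Fin p → ℝ) (lh : Fin q → ℝ) (lG lH : Fin m → ℝ),
    ((0 : Euc n) = (∑ i, lg i • P.g' i zs) + (∑ j, lh j • P.h' j zs)
        + (∑ i, (lG i • P.G' i zs + lH i • P.H' i zs))) →
    ((∀ i ∈ P.Igd zs d, 0 ≤ lg i) ∧ (∀ i ∉ P.Igd zs d, lg i = 0) ∧
      (∀ i, i ∈ P.IGs zs ∪ P.IGd zs d → lH i = 0) ∧
      (∀ i, i ∈ P.IHs zs ∪ P.IHd zs d → lG i = 0) ∧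
      ∀ i ∈ P.IGHd zs d, lG i * lH i = 0) →
    (∃ (dk : ℕ → Euc n) (t : ℕ → ℝ),
      Tendsto dk atTop (𝓝 d) ∧ (∀ k, 0 < t k) ∧ Tendsto t atTop (𝓝 0) ∧
      ∀ k, (∀ i, lg i ≠ 0 → 0 < lg i * P.g i (zs + t k • dk k)) ∧
        (∀ j, lh j ≠ 0 → 0 < lh j * P.h j (zs + t k • dk k)) ∧
        (∀ i, lG i ≠ 0 → 0 < lG i * P.G i (zs + t k • dk k)) ∧
        (∀ i, lH i ≠ 0 → 0 < lH i * P.H i (zs + t k • dk k))) →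
    lg = 0 ∧ lh = 0 ∧ lG = 0 ∧ lH = 0

/-- MPSC directional quasi-normality at `z*`: quasi-normality in every direction of
the linearization cone. -/
def DirQuasiNormal (zs : Euc n) : Prop := ∀ d ∈ P.LinCone zs, P.QuasiNormalDir zs d

/-- `(λ^g, λ^h, λ^G, λ^H)` is an S-multiplier at `z*` (S-stationarity conditions). -/
def IsSMult (zs : Euc n) (lg : Fin p → ℝ) (lh : Fin q → ℝ) (lG lH : Fin m → ℝ) : Prop :=
  ((0 : Euc n) = P.f' zs
      + (∑ i ∈ Finset.univ.filter (fun i => i ∈ P.Ig zs), lg i • P.g' i zs)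
      + (∑ j, lh j • P.h' j zs) + (∑ i, (lG i • P.G' i zs + lH i • P.H' i zs))) ∧
  (∀ i ∈ P.Ig zs, 0 ≤ lg i) ∧ (∀ i ∈ P.IHs zs, lG i = 0) ∧ (∀ i ∈ P.IGs zs, lH i = 0) ∧
  ∀ i ∈ P.IGH zs, lG i = 0 ∧ lH i = 0

/-- `(λ^g, λ^h, λ^G, λ^H)` is an M-multiplier at `z*` (M-stationarity conditions). -/
def IsMMult (zs : Euc n) (lg : Fin p → ℝ) (lh : Fin q → ℝ) (lG lH : Fin m → ℝ) : Prop :=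
  ((0 : Euc n) = P.f' zs
      + (∑ i ∈ Finset.univ.filter (fun i => i ∈ P.Ig zs), lg i • P.g' i zs)
      + (∑ j, lh j • P.h' j zs) + (∑ i, (lG i • P.G' i zs + lH i • P.H' i zs))) ∧
  (∀ i ∈ P.Ig zs, 0 ≤ lg i) ∧ (∀ i ∈ P.IHs zs, lG i = 0) ∧ (∀ i ∈ P.IGs zs, lH i = 0) ∧
  ∀ i ∈ P.IGH zs, lG i * lH i = 0

/-- The rank `r(z*; d)` of the relevant family of gradients. -/
def rankd (zs d : Euc n) : ℕ :=
  Set.finrank ℝ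
    ((fun i => P.g' i zs) '' P.Igd zs d ∪ Set.range (fun j => P.h' j zs) ∪
      (fun i => P.G' i zs) '' (P.IGs zs ∪ P.IGd zs d ∪ P.IGHd zs d) ∪
      (fun i => P.H' i zs) '' (P.IHs zs ∪ P.IHd zs d ∪ P.IGHd zs d))

/-- `(J_g, J_G, J_H)` is an MPSC working set in direction `d`. -/
def IsWorkingSet (zs d : Euc n) (Jg : Finset (Fin p)) (JG JH : Finset (Fin m)) : Prop :=
  (∀ i ∈ Jg, i ∈ P.Igd zs d) ∧
  (∀ i ∈ JG, i ∈ P.IGs zs ∪ P.IGd zs d ∪ P.IGHd zs d) ∧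
  (∀ i ∈ JH, i ∈ P.IHs zs ∪ P.IHd zs d ∪ P.IGHd zs d) ∧
  JG ∪ JH = Finset.univ ∧
  Jg.card + q + JG.card + JH.card = P.rankd zs d ∧
  LinearIndependent ℝ
    (Sum.elim (fun i : {i // i ∈ Jg} => P.g' i.1 zs)
      (Sum.elim (fun j : Fin q => P.h' j zs)
        (Sum.elim (fun i : {i // i ∈ JG} => P.G' i.1 zs)
          (fun i : {i // i ∈ JH} => P.H' i.1 zs))))

/-- `z*` is strongly M-stationary in direction `d`. -/
def StronglyMStatDir (zs d : Euc n) : Prop :=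
  ∃ (Jg : Finset (Fin p)) (JG JH : Finset (Fin m)) (lg : Fin p → ℝ) (lh : Fin q → ℝ)
    (lG lH : Fin m → ℝ),
    P.IsWorkingSet zs d Jg JG JH ∧ P.IsMMultDir zs d lg lh lG lH ∧
    (∀ i ∉ Jg, lg i = 0) ∧ (∀ i ∉ JG, lG i = 0) ∧ (∀ i ∉ JH, lH i = 0) ∧
    ∀ i ∈ JG ∩ JH, lG i = 0 ∧ lH i = 0

/-- The MPSC constraint-violation residual. -/
def residual (z : Euc n) : ℝ :=
  (∑ i, max (P.g i z) 0) + (∑ j, |P.h j z|) + ∑ i, min |P.G i z| |P.H i z|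

/-- The MPSC local error bound property around `z*`. -/
def ErrorBound (zs : Euc n) : Prop :=
  ∃ V ∈ 𝓝 zs, ∃ α > (0 : ℝ), ∀ z ∈ V, Metric.infDist z P.Feas ≤ α * P.residual z

/-- Equality-constraint gradients (at `z`) of the branch problem `NLP(β₁, β₂)`. -/
def EqGrads (zs : Euc n) (b1 b2 : Set (Fin m)) (z : Euc n) : Set (Euc n) :=
  Set.range (fun j => P.h' j z) ∪ (fun i => P.G' i z) '' (P.IGs zs ∪ b1) ∪
    (fun i => P.H' i z) '' (P.IHs zs ∪ b2)

/-- The index set `I⁻` of the branch problem `NLP(β₁, β₂)` at `z*`. -/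
def Iminus (zs : Euc n) (b1 b2 : Set (Fin m)) : Set (Fin p) :=
  {l | l ∈ P.Ig zs ∧
    ∃ (lh : Fin q → ℝ) (lG lH : Fin m → ℝ) (mu : Fin p → ℝ),
      (∀ i, i ∉ P.IGs zs ∪ b1 → lG i = 0) ∧ (∀ i, i ∉ P.IHs zs ∪ b2 → lH i = 0) ∧
      (∀ i, 0 ≤ mu i) ∧ (∀ i, ¬(i ∈ P.Ig zs ∧ i ≠ l) → mu i = 0) ∧
      -(P.g' l zs) = (∑ j, lh j • P.h' j zs)
        + (∑ i, (lG i • P.G' i zs + lH i • P.H' i zs)) + (∑ i, mu i • P.g' i zs)}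

/-- CRSC holds at `z*` for the branch problem `NLP(β₁, β₂)`. -/
def CRSCpiece (zs : Euc n) (b1 b2 : Set (Fin m)) : Prop :=
  ∃ U ∈ 𝓝 zs, ∀ z ∈ U,
    Set.finrank ℝ ((fun i => P.g' i z) '' P.Iminus zs b1 b2 ∪ P.EqGrads zs b1 b2 z) =
      Set.finrank ℝ ((fun i => P.g' i zs) '' P.Iminus zs b1 b2 ∪ P.EqGrads zs b1 b2 zs)

/-- MPSC piecewise CRSC: CRSC holds for every branch problem `NLP(β₁, β₂)`. -/
def PiecewiseCRSC (zs : Euc n) : Prop :=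
  ∀ b1 b2 : Set (Fin m), b1 ∪ b2 = P.IGH zs → b1 ∩ b2 = ∅ → P.CRSCpiece zs b1 b2

/-- The set-valued map `K` (index sets frozen at `z*`, gradients at `z`). -/
def Kmap (zs z : Euc n) : Set (Euc n) :=
  {y | ∃ (lg : Fin p → ℝ) (lh : Fin q → ℝ) (lG lH : Fin m → ℝ),
      (∀ i, 0 ≤ lg i) ∧ (∀ i, i ∉ P.Ig zs → lg i = 0) ∧
      (∀ i ∈ P.IGs zs, lH i = 0) ∧ (∀ i ∈ P.IHs zs, lG i = 0) ∧
      (∀ i ∈ P.IGH zs, lG i * lH i = 0) ∧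
      y = (∑ i, lg i • P.g' i z) + (∑ j, lh j • P.h' j z)
          + (∑ i, (lG i • P.G' i z + lH i • P.H' i z))}

/-- `z*` is AM-regular. -/
def AMRegular (zs : Euc n) : Prop :=
  ∀ y : Euc n,
    (∃ zk yk : ℕ → Euc n, Tendsto zk atTop (𝓝 zs) ∧ Tendsto yk atTop (𝓝 y) ∧
      ∀ k, yk k ∈ P.Kmap zs (zk k)) → y ∈ P.Kmap zs zs

/-- The regular (Fréchet) normal cone to `A` at `x`. -/
def frechetNormalCone (A : Set (Euc n)) (x : Euc n) : Set (Euc n) :=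
  {ζ | ∀ ε > (0 : ℝ), ∃ δ > (0 : ℝ), ∀ y ∈ A, ‖y - x‖ < δ → ⟪ζ, y - x⟫_ℝ ≤ ε * ‖y - x‖}

/-- The generalized Guignard constraint qualification at `z*`. -/
def GGCQ (zs : Euc n) : Prop :=
  frechetNormalCone P.Feas zs = {ζ | ∀ d ∈ P.LinCone zs, ⟪ζ, d⟫_ℝ ≤ 0}

/-- Membership in the multiplier set `R_SC`. -/
def InRSC (zs : Euc n) (lg : Fin p → ℝ) (lh : Fin q → ℝ) (lG lH : Fin m → ℝ) : Prop :=
  (∀ i, i ∉ P.Ig zs → lg i = 0) ∧ (∀ i ∈ P.IHs zs, lG i = 0) ∧ ∀ i ∈ P.IGs zs, lH i = 0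

/-- Membership in the multiplier set `N_SC`. -/
def InNSC (zs : Euc n) (mg : Fin p → ℝ) (mh : Fin q → ℝ) (mG mH : Fin m → ℝ) : Prop :=
  P.InRSC zs mg mh mG mH ∧
  (0 : Euc n) = (∑ i, mg i • P.g' i zs) + (∑ j, mh j • P.h' j zs)
      + (∑ i, (mG i • P.G' i zs + mH i • P.H' i zs))

/-- `z*` is Q-stationary with respect to the bipartition `(β₁, β₂)` of `I_GH*`. -/
def QStat (zs : Euc n) (b1 b2 : Set (Fin m)) : Prop :=
  ∃ (lg mg : Fin p → ℝ) (lh mh : Fin q → ℝ) (lG lH mG mH : Fin m → ℝ),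
    P.InRSC zs lg lh lG lH ∧
    ((0 : Euc n) = P.f' zs + (∑ i, lg i • P.g' i zs) + (∑ j, lh j • P.h' j zs)
        + (∑ i, (lG i • P.G' i zs + lH i • P.H' i zs))) ∧
    P.InNSC zs mg mh mG mH ∧
    (∀ i ∈ P.Ig zs, max (mg i) 0 ≤ lg i) ∧
    (∀ i ∈ b1, lH i = 0 ∧ lG i = mG i) ∧
    ∀ i ∈ b2, lG i = 0 ∧ lH i = mH i

end MPSC

namespace MPSCAux

/-- Violation of a scalar constraint: inequality (`b`) or equality (`¬ b`). -/
def viol (b : Prop) (s : ℝ) : ℝ := if b then max s 0 else s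

lemma hasDerivAt_viol_sq (b : Prop) (s : ℝ) :
    HasDerivAt (fun s => viol b s ^ 2) (2 * viol b s) s := by
  by_cases hb : b
  · simp only [viol, hb, if_true]
    rcases lt_trichotomy s 0 with hs | hs | hs
    · have : (fun s : ℝ => max s 0 ^ 2) =ᶠ[𝓝 s] fun _ => (0 : ℝ) := by
        filter_upwards [gt_mem_nhds hs] with x hx
        simp [max_eq_right hx.le]
      rw [max_eq_right hs.le, mul_zero]
      exact (hasDerivAt_const s (0 : ℝ)).congr_of_eventuallyEq this
    · subst hs
      rw [hasDerivAt_iff_isLittleO]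
      have h1 : (fun x : ℝ => max x 0 ^ 2 - max (0:ℝ) 0 ^ 2 - (x - 0) • (2 * max (0:ℝ) 0))
          =O[𝓝 0] fun x : ℝ => x ^ 2 := by
        refine Asymptotics.IsBigO.of_bound 1 (Eventually.of_forall fun x => ?_)
        simp only [max_self, Real.norm_eq_abs, smul_eq_mul]
        rw [one_mul, abs_of_nonneg (sq_nonneg x)]
        rcases le_total x 0 with h | h
        · simp [max_eq_right h]; positivity
        · simp [max_eq_left h]
      have h2 : (fun x : ℝ => x ^ 2) =o[𝓝 0] fun x : ℝ => x - 0 := by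
        simpa using Asymptotics.isLittleO_pow_id (𝕜 := ℝ) (n := 2) (by norm_num)
      exact h1.trans_isLittleO h2
    · have : (fun s : ℝ => max s 0 ^ 2) =ᶠ[𝓝 s] fun x => x ^ 2 := by
        filter_upwards [lt_mem_nhds hs] with x hx
        simp [max_eq_left hx.le]
      rw [max_eq_left hs.le]
      have h := (hasDerivAt_pow 2 s).congr_of_eventuallyEq this
      simpa using h
  · simp only [viol, hb, if_false]
    simpa using hasDerivAt_pow 2 s

lemma viol_continuous (b : Prop) : Continuous (viol b) := by
  unfold viol
  split_ifs <;> fun_prop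

lemma taylor1 {n : ℕ} {F : Euc n → ℝ} {F' : Euc n → Euc n} {F'' : Euc n →L[ℝ] Euc n}
    {zs : Euc n} (hF : ∀ z, HasGradientAt F (F' z) z) (h2 : HasFDerivAt F' F'' zs)
    {ε : ℝ} (hε : 0 < ε) :
    ∃ δ > 0, ∀ s : Euc n, ‖s‖ < δ →
      |F (zs + s) - F zs - ⟪F' zs, s⟫_ℝ - 1 / 2 * ⟪F'' s, s⟫_ℝ| ≤ ε * ‖s‖ ^ 2 := by
  rw [hasFDerivAt_iff_isLittleO_nhds_zero] at h2
  obtain ⟨δ, hδ, h⟩ := Metric.eventually_nhds_iff.1 (h2.def hε)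
  refine ⟨δ, hδ, fun s hs => ?_⟩
  let φ : ℝ → ℝ := fun θ => F (zs + θ • s) - θ * ⟪F' zs, s⟫_ℝ - θ ^ 2 / 2 * ⟪F'' s, s⟫_ℝ
  let φ' : ℝ → ℝ := fun θ => ⟪F' (zs + θ • s), s⟫_ℝ - ⟪F' zs, s⟫_ℝ - θ * ⟪F'' s, s⟫_ℝ
  have hφ : ∀ θ, HasDerivAt φ (φ' θ) θ := by
    intro θ
    have h1 : HasDerivAt (fun θ : ℝ => zs + θ • s) s θ := by
      simpa using ((hasDerivAt_id θ).smul_const s).const_add zs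
    have h3 := (hF (zs + θ • s)).hasFDerivAt.comp_hasDerivAt θ h1
    have h4 : HasDerivAt (fun θ : ℝ => θ * ⟪F' zs, s⟫_ℝ) ⟪F' zs, s⟫_ℝ θ := by
      simpa using (hasDerivAt_id θ).mul_const ⟪F' zs, s⟫_ℝ
    have h5 : HasDerivAt (fun θ : ℝ => θ ^ 2 / 2 * ⟪F'' s, s⟫_ℝ) (θ * ⟪F'' s, s⟫_ℝ) θ := by
      have := ((hasDerivAt_pow 2 θ).div_const 2).mul_const ⟪F'' s, s⟫_ℝ
      refine this.congr_deriv ?_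
      norm_num
    have := (h3.sub h4).sub h5
    refine this.congr_deriv ?_
    simp [φ']
  have key := norm_image_sub_le_of_norm_deriv_le_segment_01' (f := φ) (f' := φ')
    (C := ε * ‖s‖ ^ 2) (fun x _ => (hφ x).hasDerivWithinAt) (by
      intro θ hθ
      have hn : ‖θ • s‖ ≤ ‖s‖ := by
        rw [norm_smul, Real.norm_eq_abs, abs_of_nonneg hθ.1]
        exact mul_le_of_le_one_left (norm_nonneg _) hθ.2.le
      have h6 := h (y := θ • s) (by rw [dist_zero_right]; exact lt_of_le_of_lt hn hs)
      have : φ' θ = ⟪F' (zs + θ • s) - F' zs - F'' (θ • s), s⟫_ℝ := by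
        simp only [φ', inner_sub_left, map_smul, real_inner_smul_left]
      rw [this]
      calc _ ≤ ‖F' (zs + θ • s) - F' zs - F'' (θ • s)‖ * ‖s‖ := norm_inner_le_norm _ _
        _ ≤ (ε * ‖θ • s‖) * ‖s‖ := by gcongr
        _ ≤ (ε * ‖s‖) * ‖s‖ := by gcongr
        _ = _ := by ring)
  have e : φ 1 - φ 0 = F (zs + s) - F zs - ⟪F' zs, s⟫_ℝ - 1 / 2 * ⟪F'' s, s⟫_ℝ := by
    simp [φ]; ring
  rw [e] at key
  exact key

lemma taylor2 {n : ℕ} {F : Euc n → ℝ} {F' : Euc n → Euc n} {F'' : Euc n →L[ℝ] Euc n}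
    {zs : Euc n} (hF : ∀ z, HasGradientAt F (F' z) z) (h2 : HasFDerivAt F' F'' zs)
    (d : Euc n) (B : ℝ) {ε : ℝ} (hε : 0 < ε) :
    ∀ᶠ t : ℝ in 𝓝[>] 0, ∀ u : Euc n, ‖u‖ ≤ B →
      |F (zs + t • (d + t • u)) - F zs - t * ⟪F' zs, d⟫_ℝ
        - t ^ 2 * (⟪F' zs, u⟫_ℝ + 1 / 2 * ⟪F'' d, d⟫_ℝ)| ≤ ε * t ^ 2 := by
  by_cases hB : 0 ≤ B
  swap
  · exact Eventually.of_forall fun t u hu => absurd (le_trans (norm_nonneg u) hu) hB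
  set M := ‖d‖ + B + 1 with hM
  have hM0 : 0 < M := by positivity
  obtain ⟨δ, hδ, hT⟩ := taylor1 hF h2 (ε := ε / 2 / M ^ 2) (by positivity)
  have c1 : ∀ᶠ t : ℝ in 𝓝[>] 0, t < 1 :=
    eventually_nhdsWithin_of_eventually_nhds (gt_mem_nhds one_pos)
  have c2 : ∀ᶠ t : ℝ in 𝓝[>] 0, t < δ / M :=
    eventually_nhdsWithin_of_eventually_nhds (gt_mem_nhds (by positivity))
  have c3 : ∀ᶠ t : ℝ in 𝓝[>] 0, t < ε / 2 / (‖F''‖ * B * M + 1) :=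
    eventually_nhdsWithin_of_eventually_nhds (gt_mem_nhds (by positivity))
  filter_upwards [c1, c2, c3, self_mem_nhdsWithin] with t h1 h2 h3 ht u hu
  have ht : 0 < t := ht
  have hn : ‖d + t • u‖ ≤ M := by
    calc _ ≤ ‖d‖ + ‖t • u‖ := norm_add_le _ _
      _ = ‖d‖ + t * ‖u‖ := by rw [norm_smul, Real.norm_eq_abs, abs_of_pos ht]
      _ ≤ ‖d‖ + 1 * B := by gcongr
      _ ≤ M := by rw [hM]; linarith
  have hdM : ‖d‖ ≤ M := by rw [hM]; linarith
  have hs : ‖t • (d + t • u)‖ ≤ t * M := by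
    rw [norm_smul, Real.norm_eq_abs, abs_of_pos ht]; gcongr
  have hT' := hT (t • (d + t • u)) (lt_of_le_of_lt hs (by rwa [lt_div_iff₀ hM0] at h2))
  have e1 : ε / 2 / M ^ 2 * ‖t • (d + t • u)‖ ^ 2 ≤ ε / 2 * t ^ 2 := by
    calc _ ≤ ε / 2 / M ^ 2 * (t * M) ^ 2 := by gcongr
      _ = _ := by field_simp
  have e2 : ⟪F'' (t • (d + t • u)), t • (d + t • u)⟫_ℝ
      = t ^ 2 * (⟪F'' d, d⟫_ℝ + (t * ⟪F'' u, d + t • u⟫_ℝ + t * ⟪F'' d, u⟫_ℝ)) := by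
    simp only [map_smul, map_add, real_inner_smul_left, real_inner_smul_right, inner_add_left,
      inner_add_right]
    ring
  have e3 : |t * ⟪F'' u, d + t • u⟫_ℝ + t * ⟪F'' d, u⟫_ℝ| ≤ ε := by
    have a1 : |⟪F'' u, d + t • u⟫_ℝ| ≤ ‖F''‖ * B * M := by
      calc _ ≤ ‖F'' u‖ * ‖d + t • u‖ := abs_real_inner_le_norm _ _
        _ ≤ (‖F''‖ * ‖u‖) * ‖d + t • u‖ := by gcongr; exact F''.le_opNorm u
        _ ≤ _ := by gcongr
    have a2 : |⟪F'' d, u⟫_ℝ| ≤ ‖F''‖ * B * M := by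
      calc _ ≤ ‖F'' d‖ * ‖u‖ := abs_real_inner_le_norm _ _
        _ ≤ (‖F''‖ * ‖d‖) * ‖u‖ := by gcongr; exact F''.le_opNorm d
        _ ≤ (‖F''‖ * M) * B := by gcongr
        _ = _ := by ring
    have a3 : t * (‖F''‖ * B * M + 1) < ε / 2 := by rwa [lt_div_iff₀ (by positivity)] at h3
    calc _ ≤ |t * ⟪F'' u, d + t • u⟫_ℝ| + |t * ⟪F'' d, u⟫_ℝ| := abs_add_le _ _
      _ = t * |⟪F'' u, d + t • u⟫_ℝ| + t * |⟪F'' d, u⟫_ℝ| := by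
        rw [abs_mul, abs_mul, abs_of_pos ht]
      _ ≤ t * (‖F''‖ * B * M) + t * (‖F''‖ * B * M) := by gcongr
      _ ≤ ε := by nlinarith
  set q := t * ⟪F'' u, d + t • u⟫_ℝ + t * ⟪F'' d, u⟫_ℝ
  rw [e2, real_inner_smul_right, inner_add_right, real_inner_smul_right] at hT'
  have e4 := hT'.trans e1
  rw [abs_le] at e4 e3 ⊢
  have ht2 : 0 < t ^ 2 := by positivity
  constructor <;> nlinarith

lemma grad_bound {n : ℕ} {r : Euc n → ℝ} {v x : Euc n} {c : ℝ} (hc0 : 0 ≤ c)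
    (hr : HasGradientAt r v x) (h : ∀ᶠ y in 𝓝 x, r x - c * ‖y - x‖ ≤ r y) : ‖v‖ ≤ c := by
  have h1 : HasDerivAt (fun t : ℝ => x - t • v) (-v) 0 := by
    simpa using ((hasDerivAt_id (0:ℝ)).smul_const v).const_sub x
  have h0 : x - (0:ℝ) • v = x := by simp
  have h3 := (show HasFDerivAt r _ (x - (0:ℝ) • v) by rw [h0]; exact hr.hasFDerivAt).comp_hasDerivAt 0 h1
  have h4 : HasDerivAt (fun t : ℝ => r (x - t • v)) (-(‖v‖ ^ 2)) 0 := by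
    simpa [Function.comp_def] using h3
  have h5 := h4.hasDerivWithinAt (s := Set.Ioi 0)
  rw [hasDerivWithinAt_iff_tendsto_slope' (by simp)] at h5
  have hc : Tendsto (fun t : ℝ => x - t • v) (𝓝[>] 0) (𝓝 x) := by
    have : ContinuousAt (fun t : ℝ => x - t • v) 0 := h1.continuousAt
    have := this.tendsto
    rw [h0] at this
    exact this.mono_left nhdsWithin_le_nhds
  have h6 : -(c * ‖v‖) ≤ -(‖v‖ ^ 2) := by
    refine ge_of_tendsto h5 ?_
    filter_upwards [hc.eventually h, self_mem_nhdsWithin] with t ht ht0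
    have ht0 : 0 < t := ht0
    rw [slope_def_field]
    rw [le_div_iff₀ (by simpa using ht0)]
    simp only [sub_sub_cancel_left, norm_neg, norm_smul, Real.norm_eq_abs, abs_of_pos ht0] at ht
    simp only [zero_smul, sub_zero]
    nlinarith
  by_contra hcon
  push Not at hcon
  nlinarith [norm_nonneg v]

end MPSCAux
namespace MPSCAux

/-- Euclidean residual of a finite system of constraints. -/
def res {n : ℕ} {ι : Type} [Fintype ι] (I : Set ι) (c : ι → Euc n → ℝ) (x : Euc n) : ℝ :=
  Real.sqrt (∑ i, viol (i ∈ I) (c i x) ^ 2)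

lemma res_eq_zero {n : ℕ} {ι : Type} [Fintype ι] {I : Set ι} {c : ι → Euc n → ℝ} {x : Euc n} :
    res I c x = 0 ↔ ∀ i, viol (i ∈ I) (c i x) = 0 := by
  unfold res
  rw [Real.sqrt_eq_zero (by positivity), Finset.sum_eq_zero_iff_of_nonneg (by intros; positivity)]
  simp

lemma res_nonneg {n : ℕ} {ι : Type} [Fintype ι] (I : Set ι) (c : ι → Euc n → ℝ) (x : Euc n) :
    0 ≤ res I c x := Real.sqrt_nonneg _

lemma res_le {n : ℕ} {ι : Type} [Fintype ι] (I : Set ι) (c : ι → Euc n → ℝ) (x : Euc n) :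
    res I c x ≤ ∑ i, |viol (i ∈ I) (c i x)| := by
  unfold res
  rw [Real.sqrt_le_left (by positivity)]
  calc _ = ∑ i, |viol (i ∈ I) (c i x)| ^ 2 := by simp
    _ ≤ _ := Finset.sum_sq_le_sq_sum_of_nonneg (by intros; positivity)

lemma res_grad {n : ℕ} {ι : Type} [Fintype ι] {I : Set ι} {c : ι → Euc n → ℝ}
    {c' : ι → Euc n → Euc n} (hc : ∀ i z, HasGradientAt (c i) (c' i z) z) {x : Euc n}
    (hx : res I c x ≠ 0) :
    HasGradientAt (res I c) (∑ i, (viol (i ∈ I) (c i x) / res I c x) • c' i x) x := by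
  rw [hasGradientAt_iff_hasFDerivAt]
  have h1 : ∀ i, HasFDerivAt (fun y => viol (i ∈ I) (c i y) ^ 2)
      ((2 * viol (i ∈ I) (c i x)) • (InnerProductSpace.toDual ℝ (Euc n) (c' i x))) x := fun i =>
    (hasDerivAt_viol_sq (i ∈ I) (c i x)).comp_hasFDerivAt x (hc i x).hasFDerivAt
  have h2 := HasFDerivAt.fun_sum (u := Finset.univ) (fun i _ => h1 i)
  have h3 : (∑ i, viol (i ∈ I) (c i x) ^ 2) ≠ 0 := by
    intro h; apply hx; unfold res; rw [h, Real.sqrt_zero]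
  have h4 := h2.sqrt h3
  refine h4.congr_fderiv ?_
  ext v
  change _ = (InnerProductSpace.toDual ℝ (Euc n) _) v
  simp only [InnerProductSpace.toDual_apply_apply, sum_inner, real_inner_smul_left]
  simp only [smul_apply, sum_apply, InnerProductSpace.toDual_apply_apply, smul_eq_mul,
    Finset.mul_sum]
  refine Finset.sum_congr rfl fun i _ => ?_
  change 1 / (2 * res I c x) * _ = _
  field_simp

lemma res_cont {n : ℕ} {ι : Type} [Fintype ι] {I : Set ι} {c : ι → Euc n → ℝ}
    {c' : ι → Euc n → Euc n} (hc : ∀ i z, HasGradientAt (c i) (c' i z) z) :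
    Continuous (res I c) := by
  unfold res
  refine Real.continuous_sqrt.comp (continuous_finsetSum _ fun i _ => ?_)
  refine ((viol_continuous _).comp ?_).pow 2
  exact continuous_iff_continuousAt.2 fun z => (hc i z).hasFDerivAt.continuousAt

lemma penal {n : ℕ} {ι : Type} [Fintype ι] {I : Set ι} {c : ι → Euc n → ℝ}
    {c' : ι → Euc n → Euc n} (hc : ∀ i z, HasGradientAt (c i) (c' i z) z) (z : Euc n)
    {N : ℝ} (hN : 0 < N) :
    ∃ x, ‖x - z‖ ≤ N * res I c z ∧
      (res I c x ≠ 0 → ‖∑ i, (viol (i ∈ I) (c i x) / res I c x) • c' i x‖ ≤ 1 / N) := by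
  let ψ : Euc n → ℝ := fun x => res I c x + 1 / N * ‖x - z‖
  have hψ : Continuous ψ := by
    have := res_cont (I := I) hc
    fun_prop
  have hK : IsCompact (Metric.closedBall z (N * res I c z)) := isCompact_closedBall _ _
  obtain ⟨x, hxK, hx⟩ := hK.exists_isMinOn
    ⟨z, Metric.mem_closedBall_self (mul_nonneg hN.le (res_nonneg _ _ _))⟩ hψ.continuousOn
  have hz : ψ x ≤ ψ z := hx (Metric.mem_closedBall_self (mul_nonneg hN.le (res_nonneg _ _ _)))
  have hall : ∀ y, ψ x ≤ ψ y := by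
    intro y
    by_cases hy : y ∈ Metric.closedBall z (N * res I c z)
    · exact hx hy
    · rw [Metric.mem_closedBall, dist_eq_norm, not_le] at hy
      refine hz.trans ?_
      simp only [ψ, sub_self, norm_zero, mul_zero, add_zero]
      have h1 : res I c z ≤ 1 / N * ‖y - z‖ := by
        rw [one_div, ← div_eq_inv_mul, le_div_iff₀ hN]; linarith
      linarith [res_nonneg I c y]
  refine ⟨x, by simpa [dist_eq_norm] using hxK, fun h0 => ?_⟩
  refine grad_bound (by positivity) (res_grad hc h0) (Eventually.of_forall fun y => ?_)
  have h1 := hall y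
  simp only [ψ] at h1
  have h2 : ‖y - z‖ ≤ ‖y - x‖ + ‖x - z‖ := norm_sub_le_norm_sub_add_norm_sub _ _ _
  have h3 : 1 / N * ‖y - z‖ ≤ 1 / N * (‖y - x‖ + ‖x - z‖) := by gcongr
  linarith

end MPSCAux
namespace MPSCAux

lemma dir_lim {n : ℕ} {F : Euc n → ℝ} {v zs d : Euc n} (hF : HasGradientAt F v zs)
    {t : ℕ → ℝ} {D : ℕ → Euc n} (ht : ∀ k, 0 < t k) (ht0 : Tendsto t atTop (𝓝 0))
    (hD : Tendsto D atTop (𝓝 d)) :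
    Tendsto (fun k => (t k)⁻¹ * (F (zs + t k • D k) - F zs)) atTop (𝓝 ⟪v, d⟫_ℝ) := by
  have h1 : Tendsto (fun k => t k • D k) atTop (𝓝 0) := by
    simpa using ht0.smul hD
  have h2 : Tendsto (fun k => (t k)⁻¹ • (t k • D k)) atTop (𝓝 d) := by
    refine hD.congr fun k => ?_
    rw [smul_smul, inv_mul_cancel₀ (ht k).ne', one_smul]
  have := (hasFDerivWithinAt_univ.2 hF.hasFDerivAt).lim h1
    (Eventually.of_forall fun _ => Set.mem_univ _) h2
  simpa using this

lemma error_bound {n : ℕ} {ι : Type} [Fintype ι] {I : Set ι} {c : ι → Euc n → ℝ}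
    {c' : ι → Euc n → Euc n} (hc : ∀ i z, HasGradientAt (c i) (c' i z) z)
    (hcont : ∀ i, Continuous (c' i)) {zs d : Euc n}
    (hfeas : ∀ i, viol (i ∈ I) (c i zs) = 0)
    (hd1 : ∀ i ∈ I, c i zs = 0 → ⟪c' i zs, d⟫_ℝ ≤ 0)
    (hd2 : ∀ i ∉ I, ⟪c' i zs, d⟫_ℝ = 0)
    (hqn : ∀ l : ι → ℝ, ∑ i, l i • c' i zs = 0 → (∀ i ∈ I, 0 ≤ l i) →
      (∀ i, l i ≠ 0 → c i zs = 0 ∧ ⟪c' i zs, d⟫_ℝ = 0) →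
      (∃ (dk : ℕ → Euc n) (t : ℕ → ℝ), Tendsto dk atTop (𝓝 d) ∧ (∀ k, 0 < t k) ∧
        Tendsto t atTop (𝓝 0) ∧ ∀ k i, l i ≠ 0 → 0 < l i * c i (zs + t k • dk k)) → l = 0) :
    ∃ κ > 0, ∃ δ > 0, ∀ t : ℝ, 0 < t → t < δ → ∀ d' : Euc n, ‖d' - d‖ < δ →
      ∃ y, res I c y = 0 ∧ ‖y - (zs + t • d')‖ ≤ κ * res I c (zs + t • d') := by
  by_contra hcon
  push Not at hcon
  have hN : ∀ k : ℕ, (0:ℝ) < (k:ℝ) + 1 := fun k => by positivity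
  choose t ht0 ht1 dk hdk hfar using fun k : ℕ =>
    hcon (((k:ℝ) + 1) ^ 2) (by positivity) (1 / ((k:ℝ) + 1)) (by positivity)
  choose x hx1 hx2 using fun k : ℕ => penal (I := I) hc (zs + t k • dk k) (hN k)
  have hzs : res I c zs = 0 := res_eq_zero.2 hfeas
  have hxz : ∀ k, ‖x k - (zs + t k • dk k)‖ ≤ t k * ((‖d‖ + 1) / ((k:ℝ) + 1)) := by
    intro k
    have h1 := hfar k zs hzs
    have h2 : ‖zs - (zs + t k • dk k)‖ = t k * ‖dk k‖ := by
      rw [sub_add_cancel_left, norm_neg, norm_smul, Real.norm_eq_abs, abs_of_pos (ht0 k)]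
    have h3 : ‖dk k‖ ≤ ‖d‖ + 1 := by
      have h4 : ‖dk k‖ ≤ ‖d‖ + ‖dk k - d‖ := norm_le_norm_add_norm_sub' _ _
      have h5 : 1 / ((k:ℝ) + 1) ≤ 1 := by
        rw [div_le_one (hN k)]; linarith [(Nat.cast_nonneg k : (0:ℝ) ≤ k)]
      linarith [hdk k]
    have h6 : t k * ‖dk k‖ ≤ t k * (‖d‖ + 1) := by gcongr; exact (ht0 k).le
    refine (hx1 k).trans ?_
    rw [← mul_div_assoc, le_div_iff₀ (hN k)]
    nlinarith
  have hxres : ∀ k, res I c (x k) ≠ 0 := by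
    intro k h0
    have h1 := hfar k (x k) h0
    have h2 := hx1 k
    have h3 := res_nonneg I c (zs + t k • dk k)
    have h5 : (1:ℝ) ≤ (k:ℝ) + 1 := by linarith [(Nat.cast_nonneg k : (0:ℝ) ≤ k)]
    have : ((k:ℝ) + 1) * res I c (zs + t k • dk k) ≤ ((k:ℝ) + 1) ^ 2 * res I c (zs + t k • dk k) := by
      apply mul_le_mul_of_nonneg_right _ h3
      nlinarith
    linarith
  have hlim1 : Tendsto (fun k : ℕ => 1 / ((k:ℝ) + 1)) atTop (𝓝 0) :=
    tendsto_one_div_add_atTop_nhds_zero_nat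
  have htlim : Tendsto t atTop (𝓝 0) :=
    squeeze_zero (fun k => (ht0 k).le) (fun k => (ht1 k).le) hlim1
  let D : ℕ → Euc n := fun k => (t k)⁻¹ • (x k - zs)
  have hxD : ∀ k, zs + t k • D k = x k := by
    intro k
    simp only [D]
    rw [smul_smul, mul_inv_cancel₀ (ht0 k).ne', one_smul, add_sub_cancel]
  have hDlim : Tendsto D atTop (𝓝 d) := by
    rw [tendsto_iff_norm_sub_tendsto_zero]
    have hb : Tendsto (fun k : ℕ => (‖d‖ + 2) * (1 / ((k:ℝ) + 1))) atTop (𝓝 0) := by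
      simpa using hlim1.const_mul (‖d‖ + 2)
    refine squeeze_zero (fun k => norm_nonneg _) (fun k => ?_) hb
    have h1 : ‖D k - dk k‖ ≤ (‖d‖ + 1) / ((k:ℝ) + 1) := by
      have h2 := hxz k
      have h3 : x k - (zs + t k • dk k) = t k • (D k - dk k) := by
        rw [← hxD k, smul_sub]; abel
      rw [h3, norm_smul, Real.norm_eq_abs, abs_of_pos (ht0 k)] at h2
      exact le_of_mul_le_mul_left h2 (ht0 k)
    have h4 : ‖D k - d‖ ≤ ‖D k - dk k‖ + ‖dk k - d‖ := norm_sub_le_norm_sub_add_norm_sub _ _ _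
    have h5 : (‖d‖ + 2) * (1 / ((k:ℝ) + 1)) = (‖d‖ + 1) / ((k:ℝ) + 1) + 1 / ((k:ℝ) + 1) := by
      ring
    linarith [hdk k]
  have hxlim : Tendsto x atTop (𝓝 zs) := by
    have : Tendsto (fun k => zs + t k • D k) atTop (𝓝 (zs + (0:ℝ) • d)) :=
      tendsto_const_nhds.add (htlim.smul hDlim)
    simpa [hxD] using this
  let lam : ℕ → ι → ℝ := fun k i => viol (i ∈ I) (c i (x k)) / res I c (x k)
  have hpos : ∀ k, 0 < res I c (x k) := fun k => lt_of_le_of_ne (res_nonneg _ _ _) (hxres k).symm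
  have hsum1 : ∀ k, ∑ i, lam k i ^ 2 = 1 := by
    intro k
    simp only [lam, div_pow, ← Finset.sum_div]
    rw [div_eq_one_iff_eq (pow_ne_zero _ (hxres k))]
    unfold res
    rw [Real.sq_sqrt (by positivity)]
  have hbd : ∀ k, lam k ∈ Set.Icc (fun _ : ι => (-1:ℝ)) (fun _ => 1) := by
    intro k
    have : ∀ i, |lam k i| ≤ 1 := by
      intro i
      rw [← sq_le_one_iff_abs_le_one, ← hsum1 k]
      exact Finset.single_le_sum (f := fun i => lam k i ^ 2) (fun _ _ => sq_nonneg _)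
        (Finset.mem_univ i)
    exact ⟨fun i => (abs_le.1 (this i)).1, fun i => (abs_le.1 (this i)).2⟩
  obtain ⟨L, -, φ, hφ, hL⟩ := isCompact_Icc.tendsto_subseq hbd
  have hLi : ∀ i, Tendsto (fun k => lam (φ k) i) atTop (𝓝 (L i)) := fun i =>
    (tendsto_pi_nhds.1 hL) i
  have hφt := hφ.tendsto_atTop
  have hLsum : ∑ i, L i ^ 2 = 1 := by
    have h1 : Tendsto (fun k => ∑ i, lam (φ k) i ^ 2) atTop (𝓝 (∑ i, L i ^ 2)) :=
      tendsto_finsetSum _ fun i _ => (hLi i).pow 2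
    simp only [hsum1] at h1
    exact tendsto_nhds_unique h1 tendsto_const_nhds
  have hstat : ∑ i, L i • c' i zs = 0 := by
    have h1 : Tendsto (fun k => ∑ i, lam (φ k) i • c' i (x (φ k))) atTop
        (𝓝 (∑ i, L i • c' i zs)) :=
      tendsto_finsetSum _ fun i _ => (hLi i).smul
        (((hcont i).tendsto zs).comp (hxlim.comp hφt))
    have h2 : Tendsto (fun k => ∑ i, lam (φ k) i • c' i (x (φ k))) atTop (𝓝 0) := by
      rw [tendsto_zero_iff_norm_tendsto_zero]
      exact squeeze_zero (fun _ => norm_nonneg _) (fun k => hx2 (φ k) (hxres _))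
        (hlim1.comp hφt)
    exact tendsto_nhds_unique h1 h2
  have hLnn : ∀ i ∈ I, 0 ≤ L i := by
    intro i hi
    refine ge_of_tendsto' (hLi i) fun k => ?_
    simp only [lam, viol, hi, if_true]
    exact div_nonneg (le_max_right _ _) (res_nonneg _ _ _)
  have hsign : ∀ i, L i ≠ 0 → ∀ᶠ k in atTop, 0 < L i * c i (x (φ k)) := by
    intro i hi
    have h1 : Tendsto (fun k => L i * lam (φ k) i) atTop (𝓝 (L i * L i)) := (hLi i).const_mul _
    filter_upwards [h1.eventually (lt_mem_nhds (mul_self_pos.2 hi))] with k hk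
    have h2 : 0 < L i * viol (i ∈ I) (c i (x (φ k))) := by
      simp only [lam, ← mul_div_assoc] at hk
      exact (div_pos_iff_of_pos_right (hpos _)).1 hk
    by_cases hiI : i ∈ I
    · simp only [viol, hiI, if_true] at h2
      rcases le_total (c i (x (φ k))) 0 with h | h
      · rw [max_eq_right h] at h2; simp at h2
      · rwa [max_eq_left h] at h2
    · simpa only [viol, hiI, if_false] using h2
  have hsupp : ∀ i, L i ≠ 0 → c i zs = 0 ∧ ⟪c' i zs, d⟫_ℝ = 0 := by
    intro i hi
    by_cases hiI : i ∈ I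
    · have hf := hfeas i
      simp only [viol, hiI, if_true] at hf
      have hLpos : 0 < L i := lt_of_le_of_ne (hLnn i hiI) hi.symm
      have hcpos : ∀ᶠ k in atTop, 0 < c i (x (φ k)) := by
        filter_upwards [hsign i hi] with k hk
        exact (mul_pos_iff_of_pos_left hLpos).1 hk
      have hz : c i zs = 0 := by
        refine le_antisymm (max_eq_right_iff.1 hf) ?_
        have : Tendsto (fun k => c i (x (φ k))) atTop (𝓝 (c i zs)) :=
          ((hc i zs).hasFDerivAt.continuousAt.tendsto).comp (hxlim.comp hφt)
        exact ge_of_tendsto this (hcpos.mono fun _ h => h.le)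
      refine ⟨hz, le_antisymm (hd1 i hiI hz) ?_⟩
      have := dir_lim (hc i zs) (t := t ∘ φ) (D := D ∘ φ) (fun k => ht0 _) (htlim.comp hφt)
        (hDlim.comp hφt)
      refine ge_of_tendsto this ?_
      filter_upwards [hcpos] with k hk
      simp only [Function.comp, hxD, hz, sub_zero]
      exact mul_nonneg (inv_nonneg.2 (ht0 _).le) hk.le
    · have hf := hfeas i
      simp only [viol, hiI, if_false] at hf
      exact ⟨hf, hd2 i hiI⟩
  have hev : ∀ᶠ k in atTop, ∀ i, L i ≠ 0 → 0 < L i * c i (x (φ k)) := by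
    rw [eventually_all]
    intro i
    by_cases hi : L i = 0
    · exact Eventually.of_forall fun k h => absurd hi h
    · exact (hsign i hi).mono fun k hk _ => hk
  obtain ⟨K, hK⟩ := eventually_atTop.1 hev
  have hsh : Tendsto (fun k => φ (k + K)) atTop atTop := hφt.comp (tendsto_add_atTop_nat K)
  have hL0 := hqn L hstat hLnn hsupp ⟨fun k => D (φ (k + K)), fun k => t (φ (k + K)),
    hDlim.comp hsh, fun k => ht0 _, htlim.comp hsh, fun k i hi => by
      rw [hxD]; exact hK (k + K) (Nat.le_add_left _ _) i hi⟩
  rw [hL0] at hLsum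
  simp at hLsum

end MPSCAux
namespace MPSCAux

lemma viol_lip (b : Prop) (s s' : ℝ) : |viol b s| ≤ |viol b s'| + |s - s'| := by
  unfold viol
  split_ifs
  · have := abs_max_sub_max_le_abs s s' 0
    have h2 := abs_sub_abs_le_abs_sub (max s 0) (max s' 0)
    linarith
  · have h2 := abs_sub_abs_le_abs_sub s s'
    linarith

lemma viol_hom (b : Prop) {a : ℝ} (ha : 0 ≤ a) (s : ℝ) : viol b (a * s) = a * viol b s := by
  unfold viol
  split_ifs
  · rw [mul_max_of_nonneg _ _ ha, mul_zero]
  · rfl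

lemma ev_lt {a : ℝ} (ha : 0 < a) : ∀ᶠ t : ℝ in 𝓝[>] 0, t < a :=
  eventually_nhdsWithin_of_eventually_nhds (gt_mem_nhds ha)

lemma viol_est {n : ℕ} {b : Prop} {F : Euc n → ℝ} {F' : Euc n → Euc n} {F'' : Euc n →L[ℝ] Euc n}
    {zs d : Euc n} (hF : ∀ z, HasGradientAt F (F' z) z) (h2 : HasFDerivAt F' F'' zs)
    (hfeas : viol b (F zs) = 0) (hd1 : b → F zs = 0 → ⟪F' zs, d⟫_ℝ ≤ 0)
    (hd2 : ¬ b → ⟪F' zs, d⟫_ℝ = 0) (w : Euc n) {ε : ℝ} (hε : 0 < ε) :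
    ∀ᶠ t : ℝ in 𝓝[>] 0, |viol b (F (zs + t • (d + t • w)))| ≤
      t ^ 2 * ((if F zs = 0 ∧ ⟪F' zs, d⟫_ℝ = 0 then
        |viol b (⟪F' zs, w⟫_ℝ + 1 / 2 * ⟪F'' d, d⟫_ℝ)| else 0) + ε) := by
  have hT := taylor2 hF h2 d ‖w‖ hε
  by_cases hA : F zs = 0 ∧ ⟪F' zs, d⟫_ℝ = 0
  · rw [if_pos hA]
    filter_upwards [hT] with t ht
    have h1 := ht w le_rfl
    rw [hA.1, hA.2] at h1
    simp only [sub_zero, mul_zero] at h1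
    have h3 := viol_lip b (F (zs + t • (d + t • w)))
      (t ^ 2 * (⟪F' zs, w⟫_ℝ + 1 / 2 * ⟪F'' d, d⟫_ℝ))
    rw [viol_hom b (sq_nonneg t), abs_mul, abs_of_nonneg (sq_nonneg t)] at h3
    linarith
  · rw [if_neg hA]
    have hb : b := by
      by_contra hb
      refine hA ⟨?_, hd2 hb⟩
      simpa only [viol, hb, if_false] using hfeas
    have hle : F zs ≤ 0 := by
      simp only [viol, hb, if_true] at hfeas
      exact max_eq_right_iff.1 hfeas
    suffices h : ∀ᶠ t : ℝ in 𝓝[>] 0, F (zs + t • (d + t • w)) ≤ 0 by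
      filter_upwards [h] with t ht
      simp only [viol, hb, if_true]
      rw [max_eq_right ht, abs_zero]
      positivity
    rcases hle.lt_or_eq with hlt | heq
    · have hcont : Tendsto (fun t : ℝ => F (zs + t • (d + t • w))) (𝓝 0) (𝓝 (F zs)) := by
        have h1 : Tendsto (fun t : ℝ => zs + t • (d + t • w)) (𝓝 0) (𝓝 zs) := by
          have : Continuous (fun t : ℝ => zs + t • (d + t • w)) := by fun_prop
          simpa using this.tendsto 0
        exact ((hF zs).hasFDerivAt.continuousAt.tendsto).comp h1
      filter_upwards [eventually_nhdsWithin_of_eventually_nhds (hcont.eventually (gt_mem_nhds hlt))]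
        with t ht using ht.le
    · have hneg : ⟪F' zs, d⟫_ℝ < 0 :=
        lt_of_le_of_ne (hd1 hb heq) fun h => hA ⟨heq, h⟩
      set Q := |⟪F' zs, w⟫_ℝ + 1 / 2 * ⟪F'' d, d⟫_ℝ| + ε
      have hQ : 0 < Q := by positivity
      filter_upwards [hT, ev_lt (show 0 < -⟪F' zs, d⟫_ℝ / Q from div_pos (by linarith) hQ),
        self_mem_nhdsWithin] with t ht ht1 ht0
      have ht0 : 0 < t := ht0
      have h1 := (abs_le.1 (ht w le_rfl)).2
      rw [lt_div_iff₀ hQ] at ht1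
      have h3 : t ^ 2 * (⟪F' zs, w⟫_ℝ + 1 / 2 * ⟪F'' d, d⟫_ℝ) + ε * t ^ 2 ≤ t ^ 2 * Q := by
        have := mul_le_mul_of_nonneg_left (le_abs_self (⟪F' zs, w⟫_ℝ + 1 / 2 * ⟪F'' d, d⟫_ℝ))
          (sq_nonneg t)
        simp only [Q]
        linarith
      have h4 : t * (t * Q) < t * -⟪F' zs, d⟫_ℝ := mul_lt_mul_of_pos_left ht1 ht0
      rw [heq] at h1
      nlinarith

lemma exact_penalty {n : ℕ} {ι : Type} [Fintype ι] {I : Set ι} {c : ι → Euc n → ℝ}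
    {c' : ι → Euc n → Euc n} (hc : ∀ i z, HasGradientAt (c i) (c' i z) z)
    {zs d : Euc n}
    (hfeas : ∀ i, viol (i ∈ I) (c i zs) = 0)
    (hd1 : ∀ i ∈ I, c i zs = 0 → ⟪c' i zs, d⟫_ℝ ≤ 0)
    (hd2 : ∀ i ∉ I, ⟪c' i zs, d⟫_ℝ = 0)
    {c'' : ι → Euc n →L[ℝ] Euc n} (hc2 : ∀ i, HasFDerivAt (c' i) (c'' i) zs)
    {f : Euc n → ℝ} {f' : Euc n → Euc n} {f'' : Euc n →L[ℝ] Euc n}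
    (hf : ∀ z, HasGradientAt f (f' z) z) (hf2 : HasFDerivAt f' f'' zs)
    (hfd : ⟪f' zs, d⟫_ℝ ≤ 0)
    (hmin : ∀ᶠ y in 𝓝 zs, res I c y = 0 → f zs ≤ f y)
    {κ δ : ℝ} (hκ : 0 < κ) (hδ : 0 < δ)
    (heb : ∀ t : ℝ, 0 < t → t < δ → ∀ d' : Euc n, ‖d' - d‖ < δ →
      ∃ y, res I c y = 0 ∧ ‖y - (zs + t • d')‖ ≤ κ * res I c (zs + t • d'))
    (w : Euc n) :
    0 ≤ ⟪f' zs, w⟫_ℝ + 1 / 2 * ⟪f'' d, d⟫_ℝ + κ * ‖f' zs‖ *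
      ∑ i, (if c i zs = 0 ∧ ⟪c' i zs, d⟫_ℝ = 0 then
        |viol (i ∈ I) (⟪c' i zs, w⟫_ℝ + 1 / 2 * ⟪c'' i d, d⟫_ℝ)| else 0) := by
  set ρ := ∑ i, (if c i zs = 0 ∧ ⟪c' i zs, d⟫_ℝ = 0 then
        |viol (i ∈ I) (⟪c' i zs, w⟫_ℝ + 1 / 2 * ⟪c'' i d, d⟫_ℝ)| else 0) with hρ
  have hρ0 : 0 ≤ ρ := Finset.sum_nonneg fun i _ => by split_ifs <;> positivity
  by_contra hcon
  push Not at hcon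
  set η := -(⟪f' zs, w⟫_ℝ + 1 / 2 * ⟪f'' d, d⟫_ℝ + κ * ‖f' zs‖ * ρ) with hη
  have hη0 : 0 < η := by linarith
  set N : ℝ := (Fintype.card ι : ℝ)
  have hN : 0 ≤ N := Nat.cast_nonneg _
  set ε := η / (2 * (κ * ‖f' zs‖ * N + 1)) with hεd
  have hε : 0 < ε := by positivity
  have hεη : (κ * ‖f' zs‖ * N + 1) * ε = η / 2 := by
    rw [hεd]; field_simp
  set b := κ * (ρ + N * ε) with hb
  have hb0 : 0 ≤ b := by positivity
  obtain ⟨δ2, hδ2, hm⟩ := Metric.eventually_nhds_iff.1 hmin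
  have hv : ∀ᶠ t : ℝ in 𝓝[>] 0, ∀ i, _ := eventually_all.2 fun i =>
    viol_est (b := i ∈ I) (hc i) (hc2 i) (hfeas i) (hd1 i) (hd2 i) w hε
  have hT := taylor2 hf hf2 d (‖w‖ + b) hε
  obtain ⟨t, ⟨⟨⟨⟨⟨hv, hT⟩, htδ⟩, htw⟩, ht1⟩, htδ2⟩, ht0⟩ :=
    ((((((hv.and hT).and (ev_lt hδ)).and
      (ev_lt (show 0 < δ / (‖w‖ + 1) by positivity))).and (ev_lt one_pos)).and
      (ev_lt (show 0 < δ2 / (‖d‖ + (‖w‖ + b) + 1) by positivity))).and self_mem_nhdsWithin).exists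
  have ht0 : 0 < t := ht0
  rw [lt_div_iff₀ (by positivity)] at htw htδ2
  obtain ⟨y, hy0, hy⟩ := heb t ht0 htδ (d + t • w) (by
    rw [add_sub_cancel_left, norm_smul, Real.norm_eq_abs, abs_of_pos ht0]; linarith)
  have hres : res I c (zs + t • (d + t • w)) ≤ t ^ 2 * (ρ + N * ε) := by
    refine (res_le _ _ _).trans ((Finset.sum_le_sum fun i _ => hv i).trans ?_)
    rw [← Finset.mul_sum, Finset.sum_add_distrib, ← hρ]
    simp [N]
  set v : Euc n := (t ^ 2)⁻¹ • (y - (zs + t • (d + t • w))) with hvd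
  have ht2 : 0 < t ^ 2 := by positivity
  have hyv : y = zs + t • (d + t • (w + v)) := by
    have : t ^ 2 • v = y - (zs + t • (d + t • w)) := by
      rw [hvd, smul_smul, mul_inv_cancel₀ ht2.ne', one_smul]
    have h2 : y = zs + t • (d + t • w) + t ^ 2 • v := by rw [this]; abel
    rw [h2]
    module
  have hvn : ‖v‖ ≤ b := by
    rw [hvd, norm_smul, norm_inv, Real.norm_eq_abs, abs_of_pos ht2, ← div_eq_inv_mul,
      div_le_iff₀ ht2]
    refine hy.trans ?_
    have := mul_le_mul_of_nonneg_left hres hκ.le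
    rw [hb]; linarith
  have hwv : ‖w + v‖ ≤ ‖w‖ + b := (norm_add_le _ _).trans (by linarith)
  have hf1 := hm (y := y) (by
    rw [dist_eq_norm, hyv, add_sub_cancel_left, norm_smul, Real.norm_eq_abs, abs_of_pos ht0]
    refine lt_of_le_of_lt ?_ htδ2
    gcongr
    refine (norm_add_le _ _).trans ?_
    rw [norm_smul, Real.norm_eq_abs, abs_of_pos ht0]
    have : t * ‖w + v‖ ≤ 1 * (‖w‖ + b) := by gcongr
    linarith) hy0
  have hf2 := (abs_le.1 (hT (w + v) hwv)).2
  rw [← hyv, inner_add_right] at hf2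
  have h3 : ⟪f' zs, v⟫_ℝ ≤ ‖f' zs‖ * b :=
    (real_inner_le_norm _ _).trans (by gcongr)
  have h4 : t * ⟪f' zs, d⟫_ℝ ≤ 0 := mul_nonpos_of_nonneg_of_nonpos ht0.le hfd
  have h5 : ⟪f' zs, w⟫_ℝ + ⟪f' zs, v⟫_ℝ + 1 / 2 * ⟪f'' d, d⟫_ℝ + ε ≤ - (η / 2) := by
    have e1 : ‖f' zs‖ * b = κ * ‖f' zs‖ * ρ + (κ * ‖f' zs‖ * N + 1) * ε - ε := by rw [hb]; ring
    linarith
  have h6 := mul_le_mul_of_nonneg_left h5 ht2.le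
  have h7 : t ^ 2 * (-(η / 2)) < 0 := by
    have : 0 < t ^ 2 * (η / 2) := by positivity
    linarith
  linarith

end MPSCAux
namespace MPSCAux

lemma duality {n : ℕ} {ι : Type} [Fintype ι] (I : Set ι) (A : ι → Prop) (a : ι → Euc n)
    (q : ι → ℝ) (a0 : Euc n) (q0 K : ℝ) (hK : 0 ≤ K)
    (h : ∀ w : Euc n, 0 ≤ ⟪a0, w⟫_ℝ + 1 / 2 * q0 +
      K * ∑ i, (if A i then |viol (i ∈ I) (⟪a i, w⟫_ℝ + 1 / 2 * q i)| else 0)) :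
    ∃ l : ι → ℝ, (∀ i ∈ I, 0 ≤ l i) ∧ (∀ i, ¬ A i → l i = 0) ∧
      a0 + ∑ i, l i • a i = 0 ∧ 0 ≤ q0 + ∑ i, l i * q i := by
  let lo : ι → ℝ := fun i => if A i then (if i ∈ I then 0 else -K) else 0
  let hi : ι → ℝ := fun i => if A i then K else 0
  let T : (ι → ℝ) → Euc n × ℝ := fun l => (a0 + ∑ i, l i • a i, q0 + ∑ i, l i * q i)
  have hTc : Continuous T := by fun_prop
  have hs2 : IsCompact (T '' Set.Icc lo hi) := isCompact_Icc.image hTc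
  have hs1 : Convex ℝ (T '' Set.Icc lo hi) := by
    rintro _ ⟨x, hx, rfl⟩ _ ⟨y, hy, rfl⟩ α β hα hβ hαβ
    refine ⟨α • x + β • y, convex_Icc lo hi hx hy hα hβ hαβ, ?_⟩
    have e0 : a0 = α • a0 + β • a0 := by rw [← add_smul, hαβ, one_smul]
    have e1 : q0 = α * q0 + β * q0 := by rw [← add_mul, hαβ, one_mul]
    refine Prod.ext ?_ ?_
    · simp only [T, Prod.fst_add, Prod.smul_fst, Pi.add_apply, Pi.smul_apply, smul_eq_mul,
        add_smul, Finset.sum_add_distrib, smul_add, Finset.smul_sum, mul_smul]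
      nth_rewrite 1 [e0]
      abel
    · simp only [T, Prod.snd_add, Prod.smul_snd, Pi.add_apply, Pi.smul_apply, smul_eq_mul,
        add_mul, Finset.sum_add_distrib, mul_add, Finset.mul_sum, mul_assoc]
      nth_rewrite 1 [e1]
      abel
  let S : Set (Euc n × ℝ) := {0} ×ˢ Set.Ici 0
  have ht1 : Convex ℝ S := (convex_singleton 0).prod (convex_Ici 0)
  have ht2 : IsClosed S := isClosed_singleton.prod isClosed_Ici
  by_cases hdis : Disjoint (T '' Set.Icc lo hi) S
  swap
  · obtain ⟨_, ⟨l, hl, rfl⟩, hl2⟩ := Set.not_disjoint_iff.1 hdis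
    have h1 := hl2.1
    have h2 := hl2.2
    simp only [T, Set.mem_singleton_iff, Set.mem_Ici] at h1 h2
    refine ⟨l, fun i hi' => ?_, fun i hA => ?_, h1, h2⟩
    · have := hl.1 i
      simp only [lo, hi', if_true, ite_self] at this
      exact this
    · have a1 := hl.1 i
      have a2 := hl.2 i
      simp only [lo, hi, hA, if_false] at a1 a2
      exact le_antisymm a2 a1
  exfalso
  obtain ⟨F, u, v, hF1, huv, hF2⟩ := geometric_hahn_banach_compact_closed hs1 hs2 ht1 ht2 hdis
  set w : Euc n := (InnerProductSpace.toDual ℝ (Euc n)).symm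
    (F.comp (ContinuousLinearMap.inl ℝ (Euc n) ℝ)) with hw
  set τ : ℝ := F (0, 1) with hτ
  have hF : ∀ x r, F (x, r) = ⟪x, w⟫_ℝ + r * τ := by
    intro x r
    have e1 : ⟪x, w⟫_ℝ = F (x, 0) := by
      rw [real_inner_comm, hw, InnerProductSpace.toDual_symm_apply]
      simp
    have e2 : ((x, r) : Euc n × ℝ) = (x, 0) + r • (0, 1) := by simp
    rw [e2, map_add, map_smul, e1, smul_eq_mul]
  have hv0 : v < 0 := by
    have := hF2 (0, 0) ⟨rfl, Set.mem_Ici.2 le_rfl⟩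
    rw [hF] at this
    simpa using this
  have hτ0 : 0 ≤ τ := by
    by_contra hneg
    push Not at hneg
    have := hF2 (0, v / τ) ⟨rfl, (div_pos_of_neg_of_neg hv0 hneg).le⟩
    rw [hF, div_mul_cancel₀ _ hneg.ne] at this
    simp at this
  let φ : ℝ → ℝ := fun s => ⟪a0, w⟫_ℝ + s * q0 +
    K * ∑ i, (if A i then |viol (i ∈ I) (⟪a i, w⟫_ℝ + s * q i)| else 0)
  have hφc : Continuous φ := by
    refine Continuous.add (by fun_prop) (continuous_const.mul (continuous_finsetSum _ fun i _ => ?_))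
    split_ifs
    · exact ((viol_continuous _).comp (by fun_prop)).abs
    · exact continuous_const
  have hφτ : φ τ < 0 := by
    let l : ι → ℝ := fun i => if A i then
      (if i ∈ I then (if 0 < ⟪a i, w⟫_ℝ + τ * q i then K else 0)
        else (if 0 ≤ ⟪a i, w⟫_ℝ + τ * q i then K else -K)) else 0
    have hl : l ∈ Set.Icc lo hi := by
      constructor <;> intro i <;> simp only [l, lo, hi] <;> split_ifs <;> linarith
    have h1 := hF1 _ ⟨l, hl, rfl⟩
    simp only [T] at h1
    rw [hF] at h1
    have h2 : ⟪a0 + ∑ i, l i • a i, w⟫_ℝ + (q0 + ∑ i, l i * q i) * τ = φ τ := by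
      simp only [φ, inner_add_left, sum_inner, real_inner_smul_left, add_mul, Finset.sum_mul,
        Finset.mul_sum]
      have : ∀ i, K * (if A i then |viol (i ∈ I) (⟪a i, w⟫_ℝ + τ * q i)| else 0)
          = l i * ⟪a i, w⟫_ℝ + l i * q i * τ := by
        intro i
        have e : l i * ⟪a i, w⟫_ℝ + l i * q i * τ = l i * (⟪a i, w⟫_ℝ + τ * q i) := by ring
        rw [e]
        simp only [l, viol]
        split_ifs with hA hI hp hp
        · rw [max_eq_left hp.le, abs_of_pos hp]
        · rw [max_eq_right (not_lt.1 hp)]; simp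
        · rw [abs_of_nonneg hp]
        · rw [abs_of_neg (not_le.1 hp)]; ring
        · simp
      simp only [this, Finset.sum_add_distrib]
      ring
    rw [h2] at h1
    linarith
  obtain ⟨s, hs1, hs2⟩ : ∃ s, τ < s ∧ φ s < 0 := by
    have h1 : ∀ᶠ s in 𝓝[>] τ, φ s < 0 :=
      eventually_nhdsWithin_of_eventually_nhds (hφc.continuousAt.eventually (gt_mem_nhds hφτ))
    obtain ⟨s, hs⟩ := (h1.and self_mem_nhdsWithin).exists
    exact ⟨s, hs.2, hs.1⟩
  have hs0 : 0 < s := by linarith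
  have h1 := h ((2 * s)⁻¹ • w)
  have h2 : ⟪a0, (2 * s)⁻¹ • w⟫_ℝ + 1 / 2 * q0 +
      K * ∑ i, (if A i then |viol (i ∈ I) (⟪a i, (2 * s)⁻¹ • w⟫_ℝ + 1 / 2 * q i)| else 0)
      = (2 * s)⁻¹ * φ s := by
    have hp : 0 ≤ (2 * s)⁻¹ := by positivity
    have : ∀ i, (if A i then |viol (i ∈ I) (⟪a i, (2 * s)⁻¹ • w⟫_ℝ + 1 / 2 * q i)| else 0)
        = (2 * s)⁻¹ * (if A i then |viol (i ∈ I) (⟪a i, w⟫_ℝ + s * q i)| else 0) := by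
      intro i
      split_ifs
      · have e : ⟪a i, (2 * s)⁻¹ • w⟫_ℝ + 1 / 2 * q i = (2 * s)⁻¹ * (⟪a i, w⟫_ℝ + s * q i) := by
          rw [real_inner_smul_right]; field_simp
        rw [e, viol_hom _ hp, abs_mul, abs_of_nonneg hp]
      · simp
    rw [Finset.sum_congr rfl fun i _ => this i, ← Finset.mul_sum, real_inner_smul_right]
    simp only [φ]
    field_simp
  rw [h2] at h1
  have h3 : (2 * s)⁻¹ * φ s < 0 := mul_neg_of_pos_of_neg (by positivity) hs2
  linarith

theorem nlp_second_order {n : ℕ} {ι : Type} [Fintype ι] {I : Set ι} {c : ι → Euc n → ℝ}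
    {c' : ι → Euc n → Euc n} (hc : ∀ i z, HasGradientAt (c i) (c' i z) z)
    (hcont : ∀ i, Continuous (c' i)) {zs d : Euc n}
    (hfeas : ∀ i, viol (i ∈ I) (c i zs) = 0)
    (hd1 : ∀ i ∈ I, c i zs = 0 → ⟪c' i zs, d⟫_ℝ ≤ 0)
    (hd2 : ∀ i ∉ I, ⟪c' i zs, d⟫_ℝ = 0)
    (hqn : ∀ l : ι → ℝ, ∑ i, l i • c' i zs = 0 → (∀ i ∈ I, 0 ≤ l i) →
      (∀ i, l i ≠ 0 → c i zs = 0 ∧ ⟪c' i zs, d⟫_ℝ = 0) →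
      (∃ (dk : ℕ → Euc n) (t : ℕ → ℝ), Tendsto dk atTop (𝓝 d) ∧ (∀ k, 0 < t k) ∧
        Tendsto t atTop (𝓝 0) ∧ ∀ k i, l i ≠ 0 → 0 < l i * c i (zs + t k • dk k)) → l = 0)
    {c'' : ι → Euc n →L[ℝ] Euc n} (hc2 : ∀ i, HasFDerivAt (c' i) (c'' i) zs)
    {f : Euc n → ℝ} {f' : Euc n → Euc n} {f'' : Euc n →L[ℝ] Euc n}
    (hf : ∀ z, HasGradientAt f (f' z) z) (hf2 : HasFDerivAt f' f'' zs)
    (hfd : ⟪f' zs, d⟫_ℝ ≤ 0)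
    (hmin : ∀ᶠ y in 𝓝 zs, (∀ i, viol (i ∈ I) (c i y) = 0) → f zs ≤ f y) :
    ∃ l : ι → ℝ, (∀ i ∈ I, 0 ≤ l i) ∧ (∀ i, ¬ (c i zs = 0 ∧ ⟪c' i zs, d⟫_ℝ = 0) → l i = 0) ∧
      f' zs + ∑ i, l i • c' i zs = 0 ∧ 0 ≤ ⟪f'' d, d⟫_ℝ + ∑ i, l i * ⟪c'' i d, d⟫_ℝ := by
  obtain ⟨κ, hκ, δ, hδ, heb⟩ := error_bound hc hcont hfeas hd1 hd2 hqn
  exact duality I (fun i => c i zs = 0 ∧ ⟪c' i zs, d⟫_ℝ = 0) (fun i => c' i zs)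
    (fun i => ⟪c'' i d, d⟫_ℝ) (f' zs) ⟪f'' d, d⟫_ℝ (κ * ‖f' zs‖) (by positivity)
    (fun w => by
      have := exact_penalty hc hfeas hd1 hd2 hc2 hf hf2 hfd
        (by simpa only [res_eq_zero] using hmin) hκ hδ heb w
      convert this)

end MPSCAux
/-- under quasi-normality in a critical direction `d` and twice
differentiability at `z*`, there is an M-multiplier in direction `d` satisfying the
second-order condition `dᵀ ∇²L(z*,λ) d ≥ 0`. -/
theorem mpsc_quasiNormal_second_order_dir {n p q m : ℕ} (P : MPSC n p q m) (zs : Euc n)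
    (hfeas : zs ∈ P.Feas) (hmin : IsLocalMinOn P.f P.Feas zs)
    (d : Euc n) (hd : d ∈ P.Crit zs) (hqn : P.QuasiNormalDir zs d)
    (f'' : Euc n →L[ℝ] Euc n) (g'' : Fin p → Euc n →L[ℝ] Euc n)
    (h'' : Fin q → Euc n →L[ℝ] Euc n) (G'' H'' : Fin m → Euc n →L[ℝ] Euc n)
    (hf'' : HasFDerivAt P.f' f'' zs) (hg'' : ∀ i, HasFDerivAt (P.g' i) (g'' i) zs)
    (hh'' : ∀ j, HasFDerivAt (P.h' j) (h'' j) zs)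
    (hG'' : ∀ i, HasFDerivAt (P.G' i) (G'' i) zs)
    (hH'' : ∀ i, HasFDerivAt (P.H' i) (H'' i) zs) :
    ∃ (lg : Fin p → ℝ) (lh : Fin q → ℝ) (lG lH : Fin m → ℝ),
      P.IsMMultDir zs d lg lh lG lH ∧
      0 ≤ ⟪f'' d, d⟫_ℝ + (∑ i, lg i * ⟪g'' i d, d⟫_ℝ) + (∑ j, lh j * ⟪h'' j d, d⟫_ℝ)
          + (∑ i, (lG i * ⟪G'' i d, d⟫_ℝ + lH i * ⟪H'' i d, d⟫_ℝ)) := by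
  obtain ⟨hL, hfd⟩ := hd
  obtain ⟨hLg, hLh, hLG, hLH, hLGH⟩ := hL
  obtain ⟨hFg, hFh, hFGH⟩ := hfeas
  let σ : Fin m → Prop := fun i => i ∈ P.IGs zs ∪ P.IGd zs d ∪ P.IGHd zs d
  have hσG : ∀ i, σ i → P.G i zs = 0 ∧ ⟪P.G' i zs, d⟫_ℝ = 0 := by
    rintro i ((hi | hi) | hi)
    · exact ⟨hi.1, hLG i hi⟩
    · exact ⟨hi.1.1, hi.2.1⟩
    · exact ⟨hi.1.1, hi.2.1⟩
  have hσH : ∀ i, ¬ σ i → P.H i zs = 0 ∧ ⟪P.H' i zs, d⟫_ℝ = 0 := by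
    intro i hi
    by_cases hH : P.H i zs = 0
    · refine ⟨hH, ?_⟩
      by_cases hG : P.G i zs = 0
      · by_contra hHd
        have hGd : ⟪P.G' i zs, d⟫_ℝ = 0 :=
          (mul_eq_zero.1 (hLGH i ⟨hG, hH⟩)).resolve_right hHd
        exact hi (Or.inl (Or.inr ⟨⟨hG, hH⟩, hGd, hHd⟩))
      · exact hLH i ⟨hG, hH⟩
    · exact absurd (Or.inl (Or.inl ⟨(mul_eq_zero.1 (hFGH i)).resolve_right hH, hH⟩)) hi
  have hσ1 : ∀ i, i ∈ P.IHs zs ∪ P.IHd zs d → ¬ σ i := by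
    rintro i (hi | hi) hs
    · exact hi.1 (hσG i hs).1
    · exact hi.2.1 (hσG i hs).2
  have hσ2 : ∀ i, i ∈ P.IGs zs ∪ P.IGd zs d → σ i := fun i hi => Or.inl hi
  let J := Fin p ⊕ Fin q ⊕ Fin m
  let I : Set J := Set.range Sum.inl
  let c : J → Euc n → ℝ := Sum.elim P.g (Sum.elim P.h fun i => if σ i then P.G i else P.H i)
  let c' : J → Euc n → Euc n :=
    Sum.elim P.g' (Sum.elim P.h' fun i => if σ i then P.G' i else P.H' i)
  let c'' : J → Euc n →L[ℝ] Euc n :=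
    Sum.elim g'' (Sum.elim h'' fun i => if σ i then G'' i else H'' i)
  have hIl : ∀ i, (Sum.inl i : J) ∈ I := fun i => ⟨i, rfl⟩
  have hIr : ∀ i, (Sum.inr i : J) ∉ I := by rintro i ⟨j, hj⟩; cases hj
  have hc : ∀ i z, HasGradientAt (c i) (c' i z) z := by
    rintro (i | i | i) z
    · exact P.grad_g i z
    · exact P.grad_h i z
    · by_cases hs : σ i
      · simpa [c, c', hs] using P.grad_G i z
      · simpa [c, c', hs] using P.grad_H i z
  have hcont : ∀ i, Continuous (c' i) := by
    rintro (i | i | i)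
    · exact P.cont_g' i
    · exact P.cont_h' i
    · by_cases hs : σ i
      · simpa [c', hs] using P.cont_G' i
      · simpa [c', hs] using P.cont_H' i
  have hc2 : ∀ i, HasFDerivAt (c' i) (c'' i) zs := by
    rintro (i | i | i)
    · exact hg'' i
    · exact hh'' i
    · by_cases hs : σ i
      · simpa [c', c'', hs] using hG'' i
      · simpa [c', c'', hs] using hH'' i
  have hfe : ∀ i, MPSCAux.viol (i ∈ I) (c i zs) = 0 := by
    rintro (i | i | i)
    · simp only [MPSCAux.viol, hIl, if_true]
      exact max_eq_right (hFg i)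
    · simp only [MPSCAux.viol, hIr, if_false]
      exact hFh i
    · simp only [MPSCAux.viol, hIr, if_false]
      by_cases hs : σ i
      · simpa [c, hs] using (hσG i hs).1
      · simpa [c, hs] using (hσH i hs).1
  have hd1 : ∀ i ∈ I, c i zs = 0 → ⟪c' i zs, d⟫_ℝ ≤ 0 := by
    rintro _ ⟨i, rfl⟩ h0
    exact hLg i h0
  have hd2 : ∀ i ∉ I, ⟪c' i zs, d⟫_ℝ = 0 := by
    rintro (i | i | i) hi
    · exact absurd (hIl i) hi
    · exact hLh i
    · by_cases hs : σ i
      · simpa [c', hs] using (hσG i hs).2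
      · simpa [c', hs] using (hσH i hs).2
  have hfeasb : ∀ y, (∀ i, MPSCAux.viol (i ∈ I) (c i y) = 0) → y ∈ P.Feas := by
    intro y hy
    refine ⟨fun i => ?_, fun j => ?_, fun i => ?_⟩
    · have := hy (Sum.inl i)
      simp only [MPSCAux.viol, hIl, if_true] at this
      exact max_eq_right_iff.1 this
    · have := hy (Sum.inr (Sum.inl j))
      simp only [MPSCAux.viol, hIr, if_false] at this
      exact this
    · have := hy (Sum.inr (Sum.inr i))
      simp only [MPSCAux.viol, hIr, if_false] at this
      by_cases hs : σ i
      · have h1 : P.G i y = 0 := by simpa [c, hs] using this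
        rw [h1, zero_mul]
      · have h1 : P.H i y = 0 := by simpa [c, hs] using this
        rw [h1, mul_zero]
  have hmin' : ∀ᶠ y in 𝓝 zs, (∀ i, MPSCAux.viol (i ∈ I) (c i y) = 0) → P.f zs ≤ P.f y := by
    have := eventually_nhdsWithin_iff.1 hmin
    filter_upwards [this] with y hy h
    exact hy (hfeasb y h)
  have hqn' : ∀ l : J → ℝ, ∑ i, l i • c' i zs = 0 → (∀ i ∈ I, 0 ≤ l i) →
      (∀ i, l i ≠ 0 → c i zs = 0 ∧ ⟪c' i zs, d⟫_ℝ = 0) →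
      (∃ (dk : ℕ → Euc n) (t : ℕ → ℝ), Tendsto dk atTop (𝓝 d) ∧ (∀ k, 0 < t k) ∧
        Tendsto t atTop (𝓝 0) ∧ ∀ k i, l i ≠ 0 → 0 < l i * c i (zs + t k • dk k)) → l = 0 := by
    rintro l hl0 hlI hls ⟨dk, t, hdk, ht, ht0, hk⟩
    obtain ⟨r1, r2, r3, r4⟩ := hqn (fun i => l (Sum.inl i)) (fun j => l (Sum.inr (Sum.inl j)))
      (fun i => if σ i then l (Sum.inr (Sum.inr i)) else 0)
      (fun i => if σ i then 0 else l (Sum.inr (Sum.inr i))) (by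
        rw [← hl0, Fintype.sum_sum_type, Fintype.sum_sum_type, add_assoc]
        congr 2
        refine Finset.sum_congr rfl fun i _ => ?_
        by_cases hs : σ i <;> simp [c', hs]) (by
        refine ⟨fun i _ => hlI _ (hIl i), fun i hi => ?_, fun i hi => ?_, fun i hi => ?_,
          fun i hi => ?_⟩
        · by_contra h0
          exact hi (hls _ h0)
        · simp [hσ2 i hi]
        · simp [hσ1 i hi]
        · by_cases hs : σ i <;> simp [hs]) (by
        refine ⟨dk, t, hdk, ht, ht0, fun k => ⟨fun i hi => hk k _ hi, fun j hj => hk k _ hj,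
          fun i hi => ?_, fun i hi => ?_⟩⟩
        · by_cases hs : σ i
          · simp only [hs, if_true] at hi ⊢
            simpa [c, hs] using hk k _ hi
          · simp [hs] at hi
        · by_cases hs : σ i
          · simp [hs] at hi
          · simp only [hs, if_false] at hi ⊢
            simpa [c, hs] using hk k _ hi)
    funext i
    rcases i with (i | i | i)
    · exact congrFun r1 i
    · exact congrFun r2 i
    · by_cases hs : σ i
      · simpa [hs] using congrFun r3 i
      · simpa [hs] using congrFun r4 i
  obtain ⟨l, hl1, hl2, hl3, hl4⟩ := MPSCAux.nlp_second_order hc hcont hfe hd1 hd2 hqn' hc2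
    P.grad_f hf'' hfd hmin'
  have hlg : ∀ i ∉ P.Igd zs d, l (Sum.inl i) = 0 := fun i hi => hl2 _ hi
  refine ⟨fun i => l (Sum.inl i), fun j => l (Sum.inr (Sum.inl j)),
      (fun i => if σ i then l (Sum.inr (Sum.inr i)) else 0),
      (fun i => if σ i then 0 else l (Sum.inr (Sum.inr i))),
      ⟨?_, fun i _ => hl1 _ (hIl i), hlg, fun i hi => by simp [hσ1 i hi],
        fun i hi => by simp [hσ2 i hi], fun i _ => by by_cases hs : σ i <;> simp [hs]⟩, ?_⟩
  · have hA : ∑ i ∈ Finset.univ.filter (fun i => i ∈ P.Igd zs d), l (Sum.inl i) • P.g' i zs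
        = ∑ i, l (Sum.inl i) • P.g' i zs := by
      refine Finset.sum_filter_of_ne fun i _ h => ?_
      by_contra h0
      exact h (by rw [hlg i h0, zero_smul])
    have hC : ∑ i, ((if σ i then l (Sum.inr (Sum.inr i)) else 0) • P.G' i zs
        + (if σ i then 0 else l (Sum.inr (Sum.inr i))) • P.H' i zs)
        = ∑ i, l (Sum.inr (Sum.inr i)) • c' (Sum.inr (Sum.inr i)) zs := by
      refine Finset.sum_congr rfl fun i _ => ?_
      by_cases hs : σ i <;> simp [c', hs]
    rw [hA, hC, ← hl3, Fintype.sum_sum_type, Fintype.sum_sum_type, ← add_assoc, ← add_assoc]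
    rfl
  · refine hl4.trans_eq ?_
    rw [Fintype.sum_sum_type, Fintype.sum_sum_type, add_assoc, add_assoc]
    congr 3
    refine Finset.sum_congr rfl fun i _ => ?_
    by_cases hs : σ i <;> simp [c'', hs]
end
end

section
/- Let z* be a feasible point of the MPSC and suppose f, g, h, G, H are twice differentiable at z*. Suppose that for every nonzero critical direction d ∈ C(z*) there exists an S-multiplier (λ^g, λ^h, λ^G, λ^H) — i.e. multipliers satisfying 0 = ∇f(z*) + Σ_{i∈I_g*} λ_i^g ∇g_i(z*) + Σ_{j=1}^q λ_j^h ∇h_j(z*) + Σ_{i=1}^m (λ_i^G ∇G_i(z*) + λ_i^H ∇H_i(z*)), λ_i^g ≥ 0 for i ∈ I_g* and λ_i^g = 0 for i ∉ I_g*, λ_i^G = 0 for i ∈ I_H*, λ_i^H = 0 for i ∈ I_G*, and λ_i^G = λ_i^H = 0 for all i ∈ I_GH* — such that the second-order condition dᵀ ∇²_z L(z*, λ^g, λ^h, λ^G, λ^H) d > 0 holds, where L(z, λ) := f(z) + Σ λ_i^g g_i(z) + Σ λ_j^h h_j(z) + Σ (λ_i^G G_i(z) + λ_i^H H_i(z)).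 Then z* is a strict local minimizer of the MPSC. -/
open scoped Classical InnerProductSpace
open Filter Topology

noncomputable section

theorem taylor2_aux {n : ℕ} (φ : Euc n → ℝ) (φ' : Euc n → Euc n) (A : Euc n →L[ℝ] Euc n)
    (x : Euc n) (h1 : ∀ z, HasGradientAt φ (φ' z) z) (h2 : HasFDerivAt φ' A x)
    (ε : ℝ) (hε : 0 < ε) :
    ∀ᶠ z in 𝓝 x, |φ z - φ x - ⟪φ' x, z - x⟫_ℝ - (1/2) * ⟪A (z - x), z - x⟫_ℝ|
      ≤ ε * ‖z - x‖ ^ 2 := by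
  have h3 := h2.isLittleO.def hε
  obtain ⟨r, hr, hb⟩ := Metric.eventually_nhds_iff_ball.1 h3
  filter_upwards [Metric.ball_mem_nhds x hr] with z hz
  set v := z - x with hv
  have hzv : z = x + (1 : ℝ) • v := by simp [hv]
  have key := norm_image_sub_le_of_norm_deriv_le_segment_01'
    (f := fun t : ℝ => φ (x + t • v) - t * ⟪φ' x, v⟫_ℝ - (1/2) * t ^ 2 * ⟪A v, v⟫_ℝ)
    (f' := fun t : ℝ => ⟪φ' (x + t • v) - φ' x - A (t • v), v⟫_ℝ) (C := ε * ‖v‖ ^ 2) ?_ ?_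
  · rw [← Real.norm_eq_abs]
    refine le_of_eq_of_le (congrArg norm ?_) key
    have e0 : x + (0 : ℝ) • v = x := by simp
    simp only [← hzv, e0]
    ring
  · intro t _
    have hl : HasDerivAt (fun t : ℝ => x + t • v) v t := by
      simpa using ((hasDerivAt_id t).smul_const v).const_add x
    have hc := (h1 (x + t • v)).hasFDerivAt.comp_hasDerivAt t hl
    have hq := ((hc.sub ((hasDerivAt_id t).mul_const ⟪φ' x, v⟫_ℝ)).sub
      ((((hasDerivAt_id t).pow 2).const_mul (1/2 : ℝ)).mul_const ⟪A v, v⟫_ℝ)).hasDerivWithinAt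
      (s := Set.Icc (0 : ℝ) 1)
    refine hq.congr_deriv ?_
    simp [inner_sub_left, inner_smul_left]
  · intro t ht
    have hvr : ‖v‖ < r := by simpa [hv, dist_eq_norm] using hz
    have htv : ‖t • v‖ ≤ ‖v‖ := by
      rw [norm_smul, Real.norm_eq_abs, abs_of_nonneg ht.1]
      nlinarith [norm_nonneg v, ht.2]
    have hm := hb (x + t • v) (by simpa [Metric.mem_ball, dist_eq_norm] using lt_of_le_of_lt htv hvr)
    rw [add_sub_cancel_left] at hm
    calc _ ≤ ‖φ' (x + t • v) - φ' x - A (t • v)‖ * ‖v‖ := norm_inner_le_norm _ _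
      _ ≤ (ε * ‖v‖) * ‖v‖ := by
        gcongr
        exact hm.trans (by gcongr)
      _ = _ := by ring

theorem taylor2_seq {n : ℕ} (φ : Euc n → ℝ) (φ' : Euc n → Euc n) (A : Euc n →L[ℝ] Euc n)
    (x : Euc n) (h1 : ∀ z, HasGradientAt φ (φ' z) z) (h2 : HasFDerivAt φ' A x)
    (z : ℕ → Euc n) (d : Euc n) (hz : Tendsto z atTop (𝓝 x)) (hne : ∀ k, z k ≠ x)
    (hd : Tendsto (fun k => ‖z k - x‖⁻¹ • (z k - x)) atTop (𝓝 d)) :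
    Tendsto (fun k => (‖z k - x‖⁻¹) ^ 2 * (φ (z k) - φ x - ⟪φ' x, z k - x⟫_ℝ)) atTop
      (𝓝 ((1/2) * ⟪A d, d⟫_ℝ)) := by
  have ha : Tendsto (fun k => (1/2) * ⟪A (‖z k - x‖⁻¹ • (z k - x)), ‖z k - x‖⁻¹ • (z k - x)⟫_ℝ)
      atTop (𝓝 ((1/2) * ⟪A d, d⟫_ℝ)) :=
    ((((A.continuous.tendsto d).comp hd).inner hd).const_mul _)
  have hb : Tendsto (fun k => (‖z k - x‖⁻¹) ^ 2 * (φ (z k) - φ x - ⟪φ' x, z k - x⟫_ℝ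
      - (1/2) * ⟪A (z k - x), z k - x⟫_ℝ)) atTop (𝓝 0) := by
    rw [Metric.tendsto_nhds]
    intro ε hε
    filter_upwards [hz.eventually (taylor2_aux φ φ' A x h1 h2 (ε/2) (by positivity))] with k hk
    have hp : 0 < ‖z k - x‖ := norm_pos_iff.2 (sub_ne_zero.2 (hne k))
    rw [Real.dist_eq, sub_zero, abs_mul, abs_of_nonneg (by positivity)]
    calc _ ≤ (‖z k - x‖⁻¹) ^ 2 * (ε / 2 * ‖z k - x‖ ^ 2) := by gcongr
      _ = ε / 2 := by field_simp
      _ < ε := by linarith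
  have := hb.add ha
  rw [zero_add] at this
  refine this.congr fun k => ?_
  simp only [map_smul, inner_smul_left, inner_smul_right]
  simp
  ring

theorem taylor1_seq {n : ℕ} (φ : Euc n → ℝ) (φ' : Euc n)
    (x : Euc n) (h1 : HasGradientAt φ φ' x)
    (z : ℕ → Euc n) (d : Euc n) (hz : Tendsto z atTop (𝓝 x))
    (hd : Tendsto (fun k => ‖z k - x‖⁻¹ • (z k - x)) atTop (𝓝 d)) :
    Tendsto (fun k => ‖z k - x‖⁻¹ * (φ (z k) - φ x)) atTop (𝓝 ⟪φ', d⟫_ℝ) := by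
  have := (hasFDerivWithinAt_univ.2 h1.hasFDerivAt).lim (d := fun k => z k - x) (l := atTop)
    (by simpa using hz.sub_const x) (by simp) hd
  simpa using this

/-- if for each nonzero critical direction there is an S-multiplier with
positive second-order curvature, then `z*` is a strict local minimizer of the MPSC. -/
theorem mpsc_second_order_sufficient {n p q m : ℕ} (P : MPSC n p q m) (zs : Euc n)
    (hfeas : zs ∈ P.Feas)
    (f'' : Euc n →L[ℝ] Euc n) (g'' : Fin p → Euc n →L[ℝ] Euc n)
    (h'' : Fin q → Euc n →L[ℝ] Euc n) (G'' H'' : Fin m → Euc n →L[ℝ] Euc n)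
    (hf'' : HasFDerivAt P.f' f'' zs) (hg'' : ∀ i, HasFDerivAt (P.g' i) (g'' i) zs)
    (hh'' : ∀ j, HasFDerivAt (P.h' j) (h'' j) zs)
    (hG'' : ∀ i, HasFDerivAt (P.G' i) (G'' i) zs)
    (hH'' : ∀ i, HasFDerivAt (P.H' i) (H'' i) zs)
    (hyp : ∀ d ∈ P.Crit zs, d ≠ 0 →
      ∃ (lg : Fin p → ℝ) (lh : Fin q → ℝ) (lG lH : Fin m → ℝ),
        P.IsSMult zs lg lh lG lH ∧ (∀ i, i ∉ P.Ig zs → lg i = 0) ∧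
        0 < ⟪f'' d, d⟫_ℝ + (∑ i, lg i * ⟪g'' i d, d⟫_ℝ) + (∑ j, lh j * ⟪h'' j d, d⟫_ℝ)
            + (∑ i, (lG i * ⟪G'' i d, d⟫_ℝ + lH i * ⟪H'' i d, d⟫_ℝ))) :
    ∃ U ∈ 𝓝 zs, ∀ z ∈ U ∩ P.Feas, z ≠ zs → P.f zs < P.f z := by
  by_contra hcon
  have hfreq : ∃ᶠ z in 𝓝 zs, z ∈ P.Feas ∧ z ≠ zs ∧ P.f z ≤ P.f zs := by
    intro hev
    apply hcon
    refine ⟨_, hev, ?_⟩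
    rintro z ⟨hz, hzF⟩ hzne
    by_contra hlt
    exact hz ⟨hzF, hzne, not_lt.1 hlt⟩
  obtain ⟨y, hy, hyp'⟩ := exists_seq_forall_of_frequently hfreq
  have hsph : ∀ k, ‖y k - zs‖⁻¹ • (y k - zs) ∈ Metric.sphere (0 : Euc n) 1 := by
    intro k
    have hp : ‖y k - zs‖ ≠ 0 := norm_ne_zero_iff.2 (sub_ne_zero.2 (hyp' k).2.1)
    simp [norm_smul, hp]
  obtain ⟨d, hdm, σ, hσ, hd0⟩ := (isCompact_sphere (0 : Euc n) 1).tendsto_subseq hsph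
  obtain ⟨z, hzdef⟩ : ∃ z : ℕ → Euc n, z = fun k => y (σ k) := ⟨_, rfl⟩
  have hz : Tendsto z atTop (𝓝 zs) := by rw [hzdef]; exact hy.comp hσ.tendsto_atTop
  have hd : Tendsto (fun k => ‖z k - zs‖⁻¹ • (z k - zs)) atTop (𝓝 d) := by rw [hzdef]; exact hd0
  have hzF : ∀ k, z k ∈ P.Feas := fun k => by rw [hzdef]; exact (hyp' _).1
  have hzne : ∀ k, z k ≠ zs := fun k => by rw [hzdef]; exact (hyp' _).2.1
  have hzf : ∀ k, P.f (z k) ≤ P.f zs := fun k => by rw [hzdef]; exact (hyp' _).2.2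
  clear hzdef hd0 hyp' hy hsph
  have hdne : d ≠ 0 := by
    rintro rfl
    simp at hdm
  have hT1 : ∀ (φ : Euc n → ℝ) (v : Euc n), HasGradientAt φ v zs →
      Tendsto (fun k => ‖z k - zs‖⁻¹ * (φ (z k) - φ zs)) atTop (𝓝 ⟪v, d⟫_ℝ) :=
    fun φ v h => taylor1_seq φ v zs h z d hz hd
  have hGz : ∀ i, P.H i zs ≠ 0 → ∀ᶠ k in atTop, P.G i (z k) = 0 := by
    intro i hi
    filter_upwards [(((P.grad_H i zs).continuousAt.tendsto.comp hz).eventually_ne hi)] with k hk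
    exact (mul_eq_zero.1 ((hzF k).2.2 i)).resolve_right hk
  have hHz : ∀ i, P.G i zs ≠ 0 → ∀ᶠ k in atTop, P.H i (z k) = 0 := by
    intro i hi
    filter_upwards [(((P.grad_G i zs).continuousAt.tendsto.comp hz).eventually_ne hi)] with k hk
    exact (mul_eq_zero.1 ((hzF k).2.2 i)).resolve_left hk
  have hzero : ∀ (φ : Euc n → ℝ) (v : Euc n), HasGradientAt φ v zs → φ zs = 0 →
      (∀ᶠ k in atTop, φ (z k) = 0) → ⟪v, d⟫_ℝ = 0 := by
    intro φ v h h0 hk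
    refine tendsto_nhds_unique (hT1 φ v h) (tendsto_const_nhds.congr' ?_)
    filter_upwards [hk] with k hk
    simp [hk, h0]
  have hle : ∀ (φ : Euc n → ℝ) (v : Euc n), HasGradientAt φ v zs →
      (∀ k, φ (z k) ≤ φ zs) → ⟪v, d⟫_ℝ ≤ 0 := by
    intro φ v h hk
    refine le_of_tendsto' (hT1 φ v h) fun k => ?_
    exact mul_nonpos_of_nonneg_of_nonpos (by positivity) (sub_nonpos.2 (hk k))
  have hcrit : d ∈ P.Crit zs := by
    refine ⟨⟨?_, ?_, ?_, ?_, ?_⟩, hle _ _ (P.grad_f zs) hzf⟩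
    · intro i hi
      have hi' : P.g i zs = 0 := hi
      exact hle _ _ (P.grad_g i zs) fun k => by rw [hi']; exact (hzF k).1 i
    · intro j
      exact hzero _ _ (P.grad_h j zs) (hfeas.2.1 j) (Eventually.of_forall fun k => (hzF k).2.1 j)
    · intro i hi
      exact hzero _ _ (P.grad_G i zs) hi.1 (hGz i hi.2)
    · intro i hi
      exact hzero _ _ (P.grad_H i zs) hi.2 (hHz i hi.1)
    · intro i hi
      refine tendsto_nhds_unique ((hT1 _ _ (P.grad_G i zs)).mul (hT1 _ _ (P.grad_H i zs)))
        (tendsto_const_nhds.congr fun k => ?_)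
      have := (hzF k).2.2 i
      rw [hi.1, hi.2, sub_zero, sub_zero, mul_mul_mul_comm, this, mul_zero]
  obtain ⟨lg, lh, lG, lH, ⟨hst, hlg, hlG, hlH, hlGH⟩, hlg0, hpos⟩ := hyp d hcrit hdne
  have hst2 : ∀ w : Euc n, ⟪P.f' zs, w⟫_ℝ + (∑ i, lg i * ⟪P.g' i zs, w⟫_ℝ)
      + (∑ j, lh j * ⟪P.h' j zs, w⟫_ℝ)
      + (∑ i, (lG i * ⟪P.G' i zs, w⟫_ℝ + lH i * ⟪P.H' i zs, w⟫_ℝ)) = 0 := by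
    intro w
    have hs : (∑ i ∈ Finset.univ.filter (fun i => i ∈ P.Ig zs), lg i • P.g' i zs)
        = ∑ i, lg i • P.g' i zs := by
      apply Finset.sum_subset (Finset.filter_subset _ _)
      intro i _ hi
      rw [hlg0 i (by simpa using hi), zero_smul]
    rw [hs] at hst
    have := congrArg (fun u => ⟪u, w⟫_ℝ) hst
    simp only [inner_add_left, sum_inner, inner_smul_left, inner_zero_left] at this
    simpa using this.symm
  have hT2 := fun φ φ' A h1 h2 => taylor2_seq φ φ' A zs h1 h2 z d hz hzne hd
  have hlim := (((hT2 _ _ _ P.grad_f hf'').add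
    (tendsto_finsetSum Finset.univ fun i _ =>
      (hT2 _ _ _ (P.grad_g i) (hg'' i)).const_mul (lg i))).add
    (tendsto_finsetSum Finset.univ fun j _ =>
      (hT2 _ _ _ (P.grad_h j) (hh'' j)).const_mul (lh j))).add
    (tendsto_finsetSum Finset.univ fun i _ =>
      ((hT2 _ _ _ (P.grad_G i) (hG'' i)).const_mul (lG i)).add
      ((hT2 _ _ _ (P.grad_H i) (hH'' i)).const_mul (lH i)))
  have hGH : ∀ᶠ k in atTop, ∀ i, lG i * (P.G i (z k) - P.G i zs)
      + lH i * (P.H i (z k) - P.H i zs) = 0 := by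
    rw [eventually_all]
    intro i
    by_cases hG : P.G i zs = 0
    · by_cases hH : P.H i zs = 0
      · obtain ⟨a, b⟩ := hlGH i ⟨hG, hH⟩
        simp [a, b]
      · filter_upwards [hGz i hH] with k hk
        simp [hlH i ⟨hG, hH⟩, hk, hG]
    · have hH : P.H i zs = 0 := (mul_eq_zero.1 (hfeas.2.2 i)).resolve_left hG
      filter_upwards [hHz i hG] with k hk
      simp [hlG i ⟨hG, hH⟩, hk, hH]
  have hfin := le_of_tendsto (b := 0) hlim (by
    filter_upwards [hGH] with k hk
    have e1 : (∑ i, lg i * (P.g i (z k) - P.g i zs)) ≤ 0 := by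
      apply Finset.sum_nonpos
      intro i _
      by_cases hi : i ∈ P.Ig zs
      · have hi' : P.g i zs = 0 := hi
        rw [hi', sub_zero]
        exact mul_nonpos_of_nonneg_of_nonpos (hlg i hi) ((hzF k).1 i)
      · simp [hlg0 i hi]
    have e2 : (∑ j, lh j * (P.h j (z k) - P.h j zs)) = 0 := by
      apply Finset.sum_eq_zero
      intro j _
      simp [(hzF k).2.1 j, hfeas.2.1 j]
    have e3 : (∑ i, (lG i * (P.G i (z k) - P.G i zs) + lH i * (P.H i (z k) - P.H i zs))) = 0 :=
      Finset.sum_eq_zero fun i _ => hk i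
    have e4 := hst2 (z k - zs)
    have e5 := hzf k
    set c := ‖z k - zs‖⁻¹ ^ 2 with hc
    have hc0 : 0 ≤ c := by positivity
    have e6 : c * ((P.f (z k) - P.f zs) + (∑ i, lg i * (P.g i (z k) - P.g i zs))
      + (∑ j, lh j * (P.h j (z k) - P.h j zs))
      + (∑ i, (lG i * (P.G i (z k) - P.G i zs) + lH i * (P.H i (z k) - P.H i zs)))
      - (⟪P.f' zs, z k - zs⟫_ℝ + (∑ i, lg i * ⟪P.g' i zs, z k - zs⟫_ℝ)
      + (∑ j, lh j * ⟪P.h' j zs, z k - zs⟫_ℝ)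
      + (∑ i, (lG i * ⟪P.G' i zs, z k - zs⟫_ℝ + lH i * ⟪P.H' i zs, z k - zs⟫_ℝ)))) ≤ 0 := by
      rw [e4, e2, e3]
      exact mul_nonpos_of_nonneg_of_nonpos hc0 (by linarith)
    refine le_of_eq_of_le ?_ e6
    simp only [mul_sub, mul_add, Finset.mul_sum, Finset.sum_add_distrib, Finset.sum_sub_distrib,
      mul_left_comm c]
    ring)
  have : (1/2 : ℝ) * (⟪f'' d, d⟫_ℝ + (∑ i, lg i * ⟪g'' i d, d⟫_ℝ) + (∑ j, lh j * ⟪h'' j d, d⟫_ℝ)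
            + (∑ i, (lG i * ⟪G'' i d, d⟫_ℝ + lH i * ⟪H'' i d, d⟫_ℝ))) ≤ 0 := by
    refine le_of_eq_of_le ?_ hfin
    simp only [mul_add, Finset.mul_sum, Finset.sum_add_distrib, mul_left_comm (1/2 : ℝ)]
  linarith
end
end

section
/- Let z* be a feasible point of the MPSC, let d ∈ L(z*), and assume that MPSC-LICQ(d) holds at z*. Then z* is strongly M-stationary in direction d if and only if z* is S-stationary in direction d. -/
open scoped Classical InnerProductSpace
open Filter Topology

noncomputable section

theorem MPSC.rankd_eq_aux {n p q m : ℕ} (P : MPSC n p q m) (zs d : Euc n)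
    (hlicq : P.LICQd zs d) :
    P.rankd zs d = (Finset.univ.filter (fun i => i ∈ P.Igd zs d)).card + q
      + (Finset.univ.filter (fun i => i ∈ P.IGs zs ∪ P.IGd zs d ∪ P.IGHd zs d)).card
      + (Finset.univ.filter (fun i => i ∈ P.IHs zs ∪ P.IHd zs d ∪ P.IGHd zs d)).card := by
  have h1 := finrank_span_eq_card hlicq
  unfold MPSC.rankd Set.finrank
  rw [Set.Sum.elim_range, Set.Sum.elim_range, Set.Sum.elim_range] at h1
  have e : ∀ {k : ℕ} (F : Fin k → Euc n) (S : Set (Fin k)),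
      Set.range (fun i : {i // i ∈ S} => F i.1) = F '' S := by
    intro k F S
    ext x; simp
  rw [e (fun i => P.g' i zs), e (fun i => P.G' i zs), e (fun i => P.H' i zs)] at h1
  rw [Set.union_assoc, Set.union_assoc, h1]
  simp only [Fintype.card_sum, Fintype.card_subtype, Fintype.card_fin]
  omega

/-- under MPSC-LICQ(d), strong M-stationarity in direction `d` is
equivalent to S-stationarity in direction `d`. -/
theorem mpsc_strongM_iff_S_under_LICQd {n p q m : ℕ} (P : MPSC n p q m) (zs : Euc n)
    (hfeas : zs ∈ P.Feas) (d : Euc n) (hd : d ∈ P.LinCone zs) (hlicq : P.LICQd zs d) :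
    P.StronglyMStatDir zs d ↔ P.SStatDir zs d := by
  have hr := P.rankd_eq_aux zs d hlicq
  constructor
  · rintro ⟨Jg, JG, JH, lg, lh, lG, lH, ⟨w1, w2, w3, w4, w5, w6⟩, hM, -, -, -, h0⟩
    refine ⟨lg, lh, lG, lH, hM, ?_⟩
    have s1 : Jg ⊆ Finset.univ.filter (fun i => i ∈ P.Igd zs d) := fun i hi => by
      simpa using w1 i hi
    have s2 : JG ⊆ Finset.univ.filter
        (fun i => i ∈ P.IGs zs ∪ P.IGd zs d ∪ P.IGHd zs d) := fun i hi => by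
      rw [Finset.mem_filter]; exact ⟨Finset.mem_univ _, w2 i hi⟩
    have s3 : JH ⊆ Finset.univ.filter
        (fun i => i ∈ P.IHs zs ∪ P.IHd zs d ∪ P.IGHd zs d) := fun i hi => by
      rw [Finset.mem_filter]; exact ⟨Finset.mem_univ _, w3 i hi⟩
    have c1 := Finset.card_le_card s1
    have c2 := Finset.card_le_card s2
    have c3 := Finset.card_le_card s3
    have e2 := Finset.eq_of_subset_of_card_le s2 (by omega)
    have e3 := Finset.eq_of_subset_of_card_le s3 (by omega)
    intro i hi
    apply h0
    rw [Finset.mem_inter, e2, e3, Finset.mem_filter, Finset.mem_filter]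
    exact ⟨⟨Finset.mem_univ _, Or.inr hi⟩, ⟨Finset.mem_univ _, Or.inr hi⟩⟩
  · rintro ⟨lg, lh, lG, lH, hM, h0⟩
    obtain ⟨-, -, hF⟩ := hfeas
    obtain ⟨-, -, -, -, hL⟩ := hd
    have cover : ∀ i, (i ∈ P.IGs zs ∪ P.IGd zs d) ∨ (i ∈ P.IHs zs ∪ P.IHd zs d) ∨
        i ∈ P.IGHd zs d := by
      intro i
      have a := mul_eq_zero.1 (hF i)
      have b := hL i
      simp only [MPSC.IGs, MPSC.IHs, MPSC.IGd, MPSC.IHd, MPSC.IGHd, MPSC.IGH,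
        Set.mem_union, Set.mem_ofPred_eq, mul_eq_zero] at b ⊢
      tauto
    have disj : ∀ i, i ∈ P.IGs zs ∪ P.IGd zs d → i ∉ P.IHs zs ∪ P.IHd zs d ∪ P.IGHd zs d := by
      intro i
      simp only [MPSC.IGs, MPSC.IHs, MPSC.IGd, MPSC.IHd, MPSC.IGHd, MPSC.IGH,
        Set.mem_union, Set.mem_ofPred_eq]
      tauto
    obtain ⟨m1, m2, m3, m4, m5, m6⟩ := id hM
    refine ⟨Finset.univ.filter (fun i => i ∈ P.Igd zs d),
      Finset.univ.filter (fun i => i ∈ P.IGs zs ∪ P.IGd zs d ∪ P.IGHd zs d),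
      Finset.univ.filter (fun i => i ∈ P.IHs zs ∪ P.IHd zs d ∪ P.IGHd zs d),
      lg, lh, lG, lH, ⟨?_, ?_, ?_, ?_, hr.symm, ?_⟩, hM, ?_, ?_, ?_, ?_⟩
    · exact fun i hi => (Finset.mem_filter.1 hi).2
    · exact fun i hi => (Finset.mem_filter.1 hi).2
    · exact fun i hi => (Finset.mem_filter.1 hi).2
    · ext i
      rw [Finset.mem_union, Finset.mem_filter, Finset.mem_filter]
      simp only [Finset.mem_univ, true_and, iff_true]
      rcases cover i with h | h | h
      · exact Or.inl (Or.inl h)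
      · exact Or.inr (Or.inl h)
      · exact Or.inl (Or.inr h)
    · have key := hlicq.comp (Sum.map
        (fun i : {i // i ∈ Finset.univ.filter (fun i => i ∈ P.Igd zs d)} =>
          (⟨i.1, (Finset.mem_filter.1 i.2).2⟩ : {i // i ∈ P.Igd zs d}))
        (Sum.map (id : Fin q → Fin q) (Sum.map
        (fun i : {i // i ∈ Finset.univ.filter
            (fun i => i ∈ P.IGs zs ∪ P.IGd zs d ∪ P.IGHd zs d)} =>
          (⟨i.1, (Finset.mem_filter.1 i.2).2⟩ :
            {i // i ∈ P.IGs zs ∪ P.IGd zs d ∪ P.IGHd zs d}))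
        (fun i : {i // i ∈ Finset.univ.filter
            (fun i => i ∈ P.IHs zs ∪ P.IHd zs d ∪ P.IGHd zs d)} =>
          (⟨i.1, (Finset.mem_filter.1 i.2).2⟩ :
            {i // i ∈ P.IHs zs ∪ P.IHd zs d ∪ P.IGHd zs d})))))
        (by
          refine Function.Injective.sumMap ?_ (Function.Injective.sumMap
            Function.injective_id (Function.Injective.sumMap ?_ ?_)) <;>
          · intro a b hab
            exact Subtype.ext (Subtype.mk.inj hab))
      convert key using 1
      funext x
      rcases x with x | x | x | x <;> rfl
    · intro i hi
      exact m3 i (by simpa using hi)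
    · intro i hi
      rw [Finset.mem_filter] at hi
      refine m4 i ?_
      rcases cover i with h | h | h
      · exact absurd ⟨Finset.mem_univ _, Or.inl h⟩ hi
      · exact h
      · exact absurd ⟨Finset.mem_univ _, Or.inr h⟩ hi
    · intro i hi
      rw [Finset.mem_filter] at hi
      refine m5 i ?_
      rcases cover i with h | h | h
      · exact h
      · exact absurd ⟨Finset.mem_univ _, Or.inl h⟩ hi
      · exact absurd ⟨Finset.mem_univ _, Or.inr h⟩ hi
    · intro i hi
      rw [Finset.mem_inter, Finset.mem_filter, Finset.mem_filter] at hi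
      obtain ⟨⟨-, a⟩, ⟨-, b⟩⟩ := hi
      rcases a with a | a
      · exact absurd b (disj i a)
      · exact h0 i a
end
end
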